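/- arXiv:0809.3046 — 12 statements merged into one kernel-verified Lean document; each statement's English description precedes it below -/
import Mathlib

section
/- Let p be a prime number, G a group, and H a subgroup of G that is topologically p-embedded in G. Let Γ = ⟨G, t | t⁻¹ht = h for all h ∈ H⟩ be the HNN extension of G with both associated subgroups equal to H and with the identity isomorphism. Then G is topologically p-embedded in Γ; that is, for every normal subgroup N of G whose index [G:N] is a power of p, there exists a normal subgroup M of Γ whose index [Γ:M] is a power of p such that M ∩ G ≤ N (where G is identified with its canonical image in Γ). -/
/-- A subgroup `H` of `G` is topologically `p`-embedded if every normal subgroup of `H`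
of `p`-power index contains the intersection with `H` of some normal subgroup of `G` of
`p`-power index. -/
def TopPEmbedded (p : ℕ) {G : Type*} [Group G] (H : Subgroup G) : Prop :=
  ∀ N : Subgroup H, N.Normal → (∃ k : ℕ, N.index = p ^ k) →
    ∃ M : Subgroup G, M.Normal ∧ (∃ k : ℕ, M.index = p ^ k) ∧ M.subgroupOf H ≤ N

/-!
If the isomorphism `φ : A ≃* B` is conjugation by an element `x` of `G`, then sending `t` to `x`
and fixing `G` respects the relations of the HNN extension, and so defines a retraction onto `G`.
Preimages under a retraction keep normality and the index, and meet `G` exactly in the subgroup one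
started from. For the identity isomorphism take `x = 1`.
-/

section Retract

variable {G Γ : Type*} [Group G] [Group Γ] {r : Γ →* G} {s : G →* Γ}

theorem comap_comap_eq_of_leftInverse (hrs : Function.LeftInverse r s) (N : Subgroup G) :
    (N.comap r).comap s = N := by
  ext g
  rw [Subgroup.mem_comap, Subgroup.mem_comap, hrs g]

theorem exists_normal_index_eq_comap_eq_of_leftInverse (hrs : Function.LeftInverse r s)
    (N : Subgroup G) (hN : N.Normal) :
    ∃ M : Subgroup Γ, M.Normal ∧ M.index = N.index ∧ M.comap s = N :=
  ⟨N.comap r, hN.comap r, N.index_comap_of_surjective hrs.surjective,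
    comap_comap_eq_of_leftInverse hrs N⟩

end Retract

section HNN

variable {G : Type*} [Group G] {A B : Subgroup G} {φ : A ≃* B}

/-- The retraction onto the base group `G` of an HNN extension whose isomorphism `φ` is conjugation
by `x : G`. It sends the stable letter to `x`; the condition `φ a = x * a * x⁻¹` is written without
inverses, as in `HNNExtension.lift`. -/
def hnnRetraction (x : G) (hx : ∀ a : A, x * a = φ a * x) : HNNExtension G A B φ →* G :=
  HNNExtension.lift (MonoidHom.id G) x hx

theorem hnnRetraction_leftInverse_of (x : G) (hx : ∀ a : A, x * a = φ a * x) :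
    Function.LeftInverse (hnnRetraction x hx) HNNExtension.of :=
  HNNExtension.lift_of (MonoidHom.id G) x hx

theorem base_top_p_embedded_in_HNN_general (x : G) (hx : ∀ a : A, x * a = φ a * x)
    (N : Subgroup G) (hN : N.Normal) :
    ∃ M : Subgroup (HNNExtension G A B φ),
      M.Normal ∧ M.index = N.index ∧ M.comap HNNExtension.of = N :=
  exists_normal_index_eq_comap_eq_of_leftInverse (hnnRetraction_leftInverse_of x hx) N hN

end HNN

theorem base_top_p_embedded_in_HNN (p : ℕ) (hp : p.Prime) (G : Type*) [Group G]
    (H : Subgroup G) (hH : TopPEmbedded p H) :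
    ∀ N : Subgroup G, N.Normal → (∃ k : ℕ, N.index = p ^ k) →
      ∃ M : Subgroup (HNNExtension G H H (MulEquiv.refl H)), M.Normal ∧
        (∃ k : ℕ, M.index = p ^ k) ∧ M.comap (HNNExtension.of) ≤ N := by
  rintro N hN ⟨k, hk⟩
  obtain ⟨M, hM, hindex, hcomap⟩ :=
    base_top_p_embedded_in_HNN_general (φ := .refl H) 1 (by simp) N hN
  exact ⟨M, hM, ⟨k, hindex.trans hk⟩, hcomap.le⟩
end

section
/- Let p be a prime number and let G be a right-angled Artin group with finite generating set X, i.e., G is the group presented by ⟨X | [x,y] = 1 for all (x,y) ∈ Σ⟩ for some subset Σ of X × X. Then for every subset X' of X, the subgroup ⟨X'⟩ of G generated by the images of the elements of X' is topologically p-embedded in G: for every normal subgroup N of ⟨X'⟩ of index a power of p there exists a normal subgroup M of G of index a power of p with M ∩ ⟨X'⟩ ≤ N. -/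
open scoped commutatorElement

/-!
Killing the generators outside `X'` sends each relator `[x, y]` to itself or to `1`, so it induces
a retraction of the right-angled Artin group onto `⟨X'⟩`. A retract is topologically `p`-embedded:
the preimage of `N` under the retraction has the same index as `N` and meets the retract in `N`.
-/

theorem topPEmbedded_of_retraction (p : ℕ) {G : Type*} [Group G] {H : Subgroup G} (ρ : G →* H)
    (hρ : Function.LeftInverse ρ H.subtype) : TopPEmbedded p H := by
  rintro N hN ⟨k, hk⟩
  refine ⟨N.comap ρ, hN.comap ρ, ⟨k, ?_⟩, fun h hh => ?_⟩
  · rw [N.index_comap_of_surjective hρ.surjective, hk]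
  · have hρh : ρ (H.subtype h) ∈ N := hh
    rwa [hρ h] at hρh

section Presented

variable {X : Type*}

/-- The endomorphism of the free group on `X` that fixes the generators in `X'` and kills the
others; when it respects the relators of a presentation, it induces a retraction of the presented
group onto the subgroup generated by `X'`. -/
noncomputable def killOutside (X' : Set X) : FreeGroup X →* FreeGroup X :=
  FreeGroup.lift (X'.mulIndicator FreeGroup.of)

theorem killOutside_of_mem {X' : Set X} {x : X} (hx : x ∈ X') :
    killOutside X' (FreeGroup.of x) = FreeGroup.of x := by
  rw [killOutside, FreeGroup.lift_apply_of, Set.mulIndicator_of_mem hx]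

theorem killOutside_of_notMem {X' : Set X} {x : X} (hx : x ∉ X') :
    killOutside X' (FreeGroup.of x) = 1 := by
  rw [killOutside, FreeGroup.lift_apply_of, Set.mulIndicator_of_notMem hx]

theorem killOutside_mem_closure (X' : Set X) (w : FreeGroup X) :
    killOutside X' w ∈ Subgroup.closure (FreeGroup.of '' X') := by
  refine FreeGroup.range_lift_le (f := X'.mulIndicator FreeGroup.of) ?_ ⟨w, rfl⟩
  rintro _ ⟨x, rfl⟩
  by_cases hx : x ∈ X'
  · rw [Set.mulIndicator_of_mem hx]
    exact Subgroup.subset_closure ⟨x, hx, rfl⟩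
  · rw [Set.mulIndicator_of_notMem hx]
    exact one_mem _

theorem killOutside_commutator_eq_self_or_eq_one (X' : Set X) (x y : X) :
    killOutside X' ⁅FreeGroup.of x, FreeGroup.of y⁆ = ⁅FreeGroup.of x, FreeGroup.of y⁆ ∨
      killOutside X' ⁅FreeGroup.of x, FreeGroup.of y⁆ = 1 := by
  rw [map_commutatorElement]
  by_cases hx : x ∈ X'
  · by_cases hy : y ∈ X'
    · exact .inl (by rw [killOutside_of_mem hx, killOutside_of_mem hy])
    · exact .inr (by rw [killOutside_of_notMem hy, commutatorElement_one_right])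
  · exact .inr (by rw [killOutside_of_notMem hx, commutatorElement_one_left])

variable {rels : Set (FreeGroup X)} {X' : Set X}

theorem exists_retraction_closure_of_image
    (hkill : ∀ r ∈ rels, killOutside X' r ∈ Subgroup.normalClosure rels) :
    ∃ ρ : PresentedGroup rels →* Subgroup.closure (PresentedGroup.of (rels := rels) '' X'),
      Function.LeftInverse ρ (Subgroup.subtype _) := by
  let ρ : PresentedGroup rels →* PresentedGroup rels :=
    QuotientGroup.map _ _ (killOutside X') (Subgroup.normalClosure_le_normal hkill)
  have ρ_mk (w : FreeGroup X) :
      ρ (PresentedGroup.mk rels w) = PresentedGroup.mk rels (killOutside X' w) := rfl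
  have ρ_mem (g : PresentedGroup rels) :
      ρ g ∈ Subgroup.closure (PresentedGroup.of (rels := rels) '' X') := by
    obtain ⟨w, rfl⟩ := PresentedGroup.mk_surjective rels g
    have mk_mem := Subgroup.mem_map_of_mem (PresentedGroup.mk rels) (killOutside_mem_closure X' w)
    rwa [MonoidHom.map_closure, Set.image_image] at mk_mem
  have ρ_fixes : Set.EqOn ρ (MonoidHom.id _) (PresentedGroup.of '' X') := by
    rintro _ ⟨x, hx, rfl⟩
    exact (ρ_mk _).trans (congrArg _ (killOutside_of_mem hx))
  exact ⟨ρ.codRestrict _ ρ_mem,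
    fun h => Subtype.ext (MonoidHom.eqOn_closure ρ_fixes h.2)⟩

end Presented

theorem raag_parabolic_top_p_embedded_general (p : ℕ) {X : Type*} (S : Set (X × X))
    (rels : Set (FreeGroup X))
    (hrels : rels = (fun q : X × X => ⁅FreeGroup.of q.1, FreeGroup.of q.2⁆) '' S)
    (X' : Set X) :
    TopPEmbedded p (Subgroup.closure ((PresentedGroup.of (rels := rels)) '' X')) := by
  have hkill : ∀ r ∈ rels, killOutside X' r ∈ Subgroup.normalClosure rels := by
    intro r hr
    obtain ⟨⟨x, y⟩, -, rfl⟩ := hrels ▸ hr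
    rcases killOutside_commutator_eq_self_or_eq_one X' x y with hself | hone
    · exact hself ▸ Subgroup.subset_normalClosure hr
    · exact hone ▸ one_mem _
  obtain ⟨ρ, hρ⟩ := exists_retraction_closure_of_image hkill
  exact topPEmbedded_of_retraction p ρ hρ

/-- In a right-angled Artin group `⟨X | [x,y] = 1 for (x,y) ∈ S⟩`, the subgroup generated
by the images of any subset `X'` of the generating set `X` is topologically `p`-embedded. -/
theorem raag_parabolic_top_p_embedded (p : ℕ) (hp : p.Prime) (X : Type*) [Finite X]
    (S : Set (X × X)) (rels : Set (FreeGroup X))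
    (hrels : rels = (fun q : X × X => ⁅FreeGroup.of q.1, FreeGroup.of q.2⁆) '' S)
    (X' : Set X) :
    TopPEmbedded p (Subgroup.closure ((PresentedGroup.of (rels := rels)) '' X')) :=
  raag_parabolic_top_p_embedded_general p S rels hrels X'
end

section
/- Let p be a prime number, let G be a finite p-group, and let H be a subgroup of G. Let Γ = ⟨G, t | t⁻¹ht = h for all h ∈ H⟩ be the HNN extension of G with both associated subgroups equal to H and with the identity isomorphism. Then Γ is residually p-finite. -/
/-- A group is residually `p`-finite if every nontrivial element has nontrivial image
under some homomorphism to a finite `p`-group. -/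
def ResiduallyPFinite (p : ℕ) (G : Type*) [Group G] : Prop :=
  ∀ g : G, g ≠ 1 → ∃ (P : Type) (_ : Group P) (f : G →* P),
    (∃ k : ℕ, Nat.card P = p ^ k) ∧ f g ≠ 1

/-!
Write `Γ` for the HNN extension. Killing the stable letter retracts `Γ` onto `G`, and the kernel is
free on the conjugates `g t g⁻¹`, which depend only on the coset `gH`; so `Γ` is the semidirect
product `FreeGroup (G ⧸ H) ⋊ G`, with `G` permuting the basis.

An extension of a residually `p`-finite group `K` by a finite `p`-group is residually `p`-finite:
if `N` is normal of `p`-power index in `K`, then all its conjugates contain the `p ^ m`-th powers of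
`K` for a common `m`, so the quotient by their intersection is a finite `p`-group.

A free group is residually `p`-finite by Magnus' argument: write a nontrivial element as
`x₁ ^ e₁ * ⋯ * xₙ ^ eₙ` with `xₖ ≠ xₖ₊₁` and `eₖ ≠ 0`, and map each letter `x` to the unitriangular
matrix `1 + ∑ E_{k,k+1}`, summed over those `k` with `xₖ = x`. The summand has square zero, so the
element goes to a matrix with top right entry `e₁ ⋯ eₙ`, which is nonzero modulo a large power
of `p`.
-/

namespace ResiduallyPFinite

variable {p : ℕ} {G G' : Type*} [Group G] [Group G']

theorem of_injective (hG' : ResiduallyPFinite p G') (f : G →* G') (hf : Function.Injective f) :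
    ResiduallyPFinite p G := by
  intro g hg
  obtain ⟨P, _, φ, hP, hφ⟩ := hG' (f g) ((map_ne_one_iff f hf).2 hg)
  exact ⟨P, _, φ.comp f, hP, hφ⟩

theorem of_forall_exists_normal [Fact p.Prime]
    (h : ∀ g : G, g ≠ 1 → ∃ (N : Subgroup G) (_ : N.Normal),
      N.FiniteIndex ∧ IsPGroup p (G ⧸ N) ∧ g ∉ N) :
    ResiduallyPFinite p G := by
  intro g hg
  obtain ⟨N, _, _, hN, hgN⟩ := h g hg
  -- A finite group in an arbitrary universe has an isomorphic copy in `Type`.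
  let e : G ⧸ N ≃* Shrink.{0} (G ⧸ N) := Shrink.mulEquiv.symm
  refine ⟨Shrink.{0} (G ⧸ N), inferInstance, e.toMonoidHom.comp (QuotientGroup.mk' N), ?_, ?_⟩
  · rw [← Nat.card_congr e.toEquiv]
    exact hN.exists_card_eq
  · simpa using hgN

end ResiduallyPFinite

section Extensions

variable {p : ℕ} {G : Type*} [Group G]

theorem isPGroup_quotient_normalCore {K N : Subgroup G} [K.Normal] (hK : IsPGroup p (G ⧸ K))
    {m : ℕ} (hN : ∀ x ∈ K, x ^ p ^ m ∈ N) : IsPGroup p (G ⧸ N.normalCore) := by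
  intro q
  obtain ⟨g, rfl⟩ := QuotientGroup.mk_surjective q
  obtain ⟨k, hk⟩ := hK g
  have hgK : g ^ p ^ k ∈ K := by rwa [← QuotientGroup.eq_one_iff, QuotientGroup.mk_pow]
  refine ⟨k + m, ?_⟩
  rw [← QuotientGroup.mk_pow, QuotientGroup.eq_one_iff, pow_add, pow_mul]
  intro b
  rw [← conj_pow]
  exact hN _ (Subgroup.Normal.conj_mem ‹_› _ hgK b)

theorem ResiduallyPFinite.of_normal [Fact p.Prime] (K : Subgroup G) [K.Normal] [K.FiniteIndex]
    (hGK : IsPGroup p (G ⧸ K)) (hK : ResiduallyPFinite p K) : ResiduallyPFinite p G := by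
  refine of_forall_exists_normal fun g hg => ?_
  by_cases hgK : g ∈ K
  · obtain ⟨P, _, f, ⟨m, hm⟩, hf⟩ := hK ⟨g, hgK⟩ (by simpa using hg)
    have : Finite P := Nat.finite_of_card_ne_zero (by simp [hm, NeZero.ne p])
    let N : Subgroup G := f.ker.map K.subtype
    have hpow : ∀ x ∈ K, x ^ p ^ m ∈ N := fun x hx =>
      ⟨⟨x, hx⟩ ^ p ^ m, by rw [SetLike.mem_coe, f.mem_ker, map_pow, ← hm, pow_card_eq_one'], rfl⟩
    have : N.FiniteIndex := ⟨by
      simp [N, Subgroup.index_map_subtype, Subgroup.FiniteIndex.index_ne_zero]⟩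
    have hgN : g ∉ N := by simpa [N, hgK] using hf
    exact ⟨N.normalCore, inferInstance, inferInstance, isPGroup_quotient_normalCore hGK hpow,
      fun h => hgN (N.normalCore_le h)⟩
  · exact ⟨K, ‹_›, ‹_›, hGK, hgK⟩

theorem ResiduallyPFinite.semidirectProduct [Fact p.Prime] {F : Type*} [Group F] [Finite G]
    (hF : ResiduallyPFinite p F) (hG : IsPGroup p G) (α : G →* MulAut F) :
    ResiduallyPFinite p (F ⋊[α] G) := by
  let K : Subgroup (F ⋊[α] G) := SemidirectProduct.rightHom.ker
  have hquot : IsPGroup p ((F ⋊[α] G) ⧸ K) :=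
    hG.of_injective _ (QuotientGroup.kerLift_injective SemidirectProduct.rightHom)
  have hK : ResiduallyPFinite p K := by
    rw [show K = _ from SemidirectProduct.range_inl_eq_ker_rightHom.symm]
    let e := MonoidHom.ofInjective (SemidirectProduct.inl_injective (φ := α))
    exact hF.of_injective e.symm.toMonoidHom e.symm.injective
  exact of_normal K hquot hK

end Extensions

section Unitriangular

open Matrix

variable {ι R : Type*} [LinearOrder ι] [CommRing R]

theorem mul_apply_self_of_isUpperTriangular [Fintype ι] {M N : Matrix ι ι R}
    (hM : M.IsUpperTriangular) (hN : N.IsUpperTriangular) (i : ι) :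
    (M * N) i i = M i i * N i i := by
  rw [mul_apply]
  refine Finset.sum_eq_single i (fun k _ hki => ?_) (by simp)
  rcases hki.lt_or_gt with hlt | hgt
  · rw [hM hlt, zero_mul]
  · rw [hN hgt, mul_zero]

/-- Upper unitriangular matrices: upper triangular with ones on the diagonal. -/
def IsUnitriangular (M : Matrix ι ι R) : Prop :=
  M.IsUpperTriangular ∧ ∀ i, M i i = 1

namespace IsUnitriangular

variable {M N : Matrix ι ι R}

theorem one : IsUnitriangular (1 : Matrix ι ι R) :=
  ⟨blockTriangular_one, one_apply_eq⟩

variable [Fintype ι]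

theorem mul (hM : IsUnitriangular M) (hN : IsUnitriangular N) : IsUnitriangular (M * N) :=
  ⟨hM.1.mul hN.1, fun i => by
    rw [mul_apply_self_of_isUpperTriangular hM.1 hN.1, hM.2, hN.2, one_mul]⟩

theorem isUnit (hM : IsUnitriangular M) : IsUnit M := by
  rw [isUnit_iff_isUnit_det, det_of_isUpperTriangular hM.1]
  simp [hM.2]

theorem units_inv {u : (Matrix ι ι R)ˣ} (hu : IsUnitriangular (u : Matrix ι ι R)) :
    IsUnitriangular ((u⁻¹ : (Matrix ι ι R)ˣ) : Matrix ι ι R) := by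
  have htri : ((u⁻¹ : (Matrix ι ι R)ˣ) : Matrix ι ι R).IsUpperTriangular := by
    have := u.invertible
    rw [coe_units_inv]
    exact blockTriangular_inv_of_blockTriangular hu.1
  refine ⟨htri, fun i => ?_⟩
  have hdiag := mul_apply_self_of_isUpperTriangular hu.1 htri i
  rwa [Units.mul_inv, one_apply_eq, hu.2, one_mul, eq_comm] at hdiag

end IsUnitriangular

variable [Fintype ι]

variable (ι R) in
/-- The group of upper unitriangular matrices over `R`, inside the general linear group. Over a
finite ring of `p`-power order it is a finite `p`-group. -/
def unitriangularGroup : Subgroup (Matrix ι ι R)ˣ where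
  carrier := {u | IsUnitriangular (u : Matrix ι ι R)}
  one_mem' := .one
  mul_mem' := .mul
  inv_mem' := .units_inv

namespace unitriangularGroup

/-- The inclusion of the unitriangular group into the matrix ring, as a monoid homomorphism. -/
def toMatrix : unitriangularGroup ι R →* Matrix ι ι R :=
  (Units.coeHom _).comp (unitriangularGroup ι R).subtype

theorem toMatrix_injective : Function.Injective (toMatrix : unitriangularGroup ι R → _) :=
  Units.val_injective.comp Subtype.val_injective

/-- A unitriangular matrix as an element of the unitriangular group. -/
noncomputable def ofMatrix (M : Matrix ι ι R) (hM : IsUnitriangular M) : unitriangularGroup ι R :=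
  ⟨hM.isUnit.unit, hM⟩

theorem toMatrix_ofMatrix {M : Matrix ι ι R} (hM : IsUnitriangular M) :
    toMatrix (ofMatrix M hM) = M :=
  rfl

theorem bijective_entries_above_diagonal : Function.Bijective
    fun (u : unitriangularGroup ι R) (q : {q : ι × ι // q.1 < q.2}) =>
      toMatrix u q.1.1 q.1.2 := by
  constructor
  · intro u v huv
    refine toMatrix_injective (Matrix.ext fun i j => ?_)
    rcases lt_trichotomy i j with hij | rfl | hji
    · exact congrFun huv ⟨(i, j), hij⟩
    · exact (u.2.2 i).trans (v.2.2 i).symm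
    · exact (u.2.1 hji).trans (v.2.1 hji).symm
  · intro a
    let M : Matrix ι ι R := of fun i j =>
      if hij : i < j then a ⟨(i, j), hij⟩ else (1 : Matrix ι ι R) i j
    have hM : IsUnitriangular M :=
      ⟨fun i j (hji : j < i) => by simp [M, hji.not_gt, hji.ne'], fun i => by simp [M]⟩
    exact ⟨ofMatrix M hM, funext fun q => dif_pos q.2⟩

theorem natCard : Nat.card (unitriangularGroup ι R) =
    Nat.card R ^ Nat.card {q : ι × ι // q.1 < q.2} := by
  rw [Nat.card_congr (Equiv.ofBijective _ bijective_entries_above_diagonal), Nat.card_fun]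

end unitriangularGroup

end Unitriangular

section Bandwidth

open Matrix

variable {N : ℕ} {R : Type*} [CommSemiring R]

/-- `A` has upper bandwidth at most `a`: its entries more than `a` places to the right of the
diagonal vanish. -/
def HasUpperBandwidth (a : ℕ) (A : Matrix (Fin N) (Fin N) R) : Prop :=
  ∀ i j : Fin N, (i : ℕ) + a < j → A i j = 0

namespace HasUpperBandwidth

variable {a b : ℕ} {A B : Matrix (Fin N) (Fin N) R}

theorem one : HasUpperBandwidth 0 (1 : Matrix (Fin N) (Fin N) R) :=
  fun _ _ hij => one_apply_ne (Fin.ne_of_lt hij)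

theorem mul (hA : HasUpperBandwidth a A) (hB : HasUpperBandwidth b B) :
    HasUpperBandwidth (a + b) (A * B) := by
  intro i k hik
  rw [Matrix.mul_apply]
  refine Finset.sum_eq_zero fun j _ => ?_
  rcases lt_or_ge ((i : ℕ) + a) j with hij | hji
  · rw [hA i j hij, zero_mul]
  · rw [hB j k (by omega), mul_zero]

theorem mul_apply (hA : HasUpperBandwidth a A) (hB : HasUpperBandwidth b B) {i j k : Fin N}
    (hij : (j : ℕ) = i + a) (hjk : (k : ℕ) = j + b) : (A * B) i k = A i j * B j k := by
  rw [Matrix.mul_apply]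
  refine Finset.sum_eq_single j (fun l _ hlj => ?_) (by simp)
  rcases hlj.lt_or_gt with hlt | hgt
  · rw [hB l k (by omega), mul_zero]
  · rw [hA i l (by omega), zero_mul]

theorem list_prod {l : List (Matrix (Fin N) (Fin N) R)} (hl : ∀ A ∈ l, HasUpperBandwidth 1 A) :
    HasUpperBandwidth l.length l.prod := by
  induction l with
  | nil => exact one
  | cons A l ih =>
    rw [List.forall_mem_cons] at hl
    rw [List.prod_cons, List.length_cons, add_comm]
    exact hl.1.mul (ih hl.2)

theorem list_prod_ofFn_apply {m : ℕ} {A : Fin m → Matrix (Fin N) (Fin N) R}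
    (hA : ∀ k, HasUpperBandwidth 1 (A k)) {i j : Fin N} (hij : (j : ℕ) = i + m) :
    (List.ofFn A).prod i j =
      ∏ k : Fin m, A k ⟨i + k, by omega⟩ ⟨i + k + 1, by omega⟩ := by
  induction m generalizing i with
  | zero =>
    obtain rfl : j = i := Fin.ext hij
    simp
  | succ m ih =>
    have htail : HasUpperBandwidth m (List.ofFn fun k : Fin m => A k.succ).prod := by
      simpa using list_prod (l := List.ofFn fun k : Fin m => A k.succ)
        (List.forall_mem_ofFn_iff.2 fun k => hA k.succ)
    let i' : Fin N := ⟨i + 1, by omega⟩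
    have hi'j : (j : ℕ) = i' + m := by simp only [i']; omega
    rw [List.ofFn_succ, List.prod_cons, (hA 0).mul_apply htail (j := i') rfl hi'j,
      ih (fun k => hA k.succ) hi'j, Fin.prod_univ_succ]
    simp [i', add_comm, add_left_comm]

theorem list_prod_ofFn_apply_zero_last {n : ℕ} {A : Fin n → Matrix (Fin (n + 1)) (Fin (n + 1)) R}
    (hA : ∀ k, HasUpperBandwidth 1 (A k)) :
    (List.ofFn A).prod 0 (Fin.last n) = ∏ k, A k k.castSucc k.succ := by
  rw [list_prod_ofFn_apply hA (by simp)]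
  refine Finset.prod_congr rfl fun k _ => ?_
  congr 1 <;> simp [Fin.ext_iff]

end HasUpperBandwidth

end Bandwidth

section Superdiagonal

open Matrix

variable {n : ℕ} {R : Type*} [CommRing R]

/-- The square matrix with entries `d` on the first superdiagonal and zeros elsewhere. -/
def superdiagonal (d : Fin n → R) : Matrix (Fin (n + 1)) (Fin (n + 1)) R :=
  of fun i j => if h : (i : ℕ) + 1 = j then d ⟨i, by omega⟩ else 0

theorem superdiagonal_apply_castSucc_succ (d : Fin n → R) (k : Fin n) :
    superdiagonal d k.castSucc k.succ = d k :=
  dif_pos rfl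

theorem superdiagonal_apply_of_ne (d : Fin n → R) {i j : Fin (n + 1)} (hij : (i : ℕ) + 1 ≠ j) :
    superdiagonal d i j = 0 :=
  dif_neg hij

theorem superdiagonal_mul_superdiagonal_eq_zero {d d' : Fin n → R}
    (h : ∀ k l : Fin n, (k : ℕ) + 1 = l → d k * d' l = 0) :
    superdiagonal d * superdiagonal d' = 0 := by
  ext i m
  rw [Matrix.mul_apply]
  refine Finset.sum_eq_zero fun j _ => ?_
  by_cases hij : (i : ℕ) + 1 = j
  · by_cases hjm : (j : ℕ) + 1 = m
    · simpa [superdiagonal, hij, hjm] using h ⟨i, by omega⟩ ⟨j, by omega⟩ hij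
    · rw [superdiagonal_apply_of_ne d' hjm, mul_zero]
  · rw [superdiagonal_apply_of_ne d hij, zero_mul]

theorem isUnitriangular_one_add_superdiagonal (d : Fin n → R) :
    IsUnitriangular (1 + superdiagonal d) := by
  refine ⟨fun i j (hji : j < i) => ?_, fun i => ?_⟩
  · simp [one_apply_ne hji.ne', superdiagonal_apply_of_ne d (i := i) (j := j) (by omega)]
  · simp [superdiagonal_apply_of_ne d (i := i) (j := i) (by omega)]

theorem hasUpperBandwidth_one_add_zsmul_superdiagonal (e : ℤ) (d : Fin n → R) :
    HasUpperBandwidth 1 (1 + e • superdiagonal d) := by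
  intro i j hij
  rw [Matrix.add_apply, Matrix.smul_apply, one_apply_ne (by omega),
    superdiagonal_apply_of_ne d hij.ne, smul_zero, add_zero]

theorem one_add_zsmul_superdiagonal_apply_castSucc_succ (e : ℤ) (d : Fin n → R) (k : Fin n) :
    (1 + e • superdiagonal d) k.castSucc k.succ = e • d k := by
  rw [Matrix.add_apply, Matrix.smul_apply, one_apply_ne k.castSucc_lt_succ.ne, zero_add,
    superdiagonal_apply_castSucc_succ]

end Superdiagonal

theorem units_zpow_val_of_mul_self_eq_zero {A : Type*} [Ring A] {N : A} (hN : N * N = 0) {u : Aˣ}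
    (hu : (u : A) = 1 + N) (e : ℤ) : ((u ^ e : Aˣ) : A) = 1 + e • N := by
  have hinv : ((u⁻¹ : Aˣ) : A) = 1 - N :=
    Units.inv_eq_of_mul_eq_one_right (by rw [hu]; simp [add_mul, mul_sub, hN])
  induction e with
  | zero => simp
  | succ e ih =>
    rw [zpow_add_one, Units.val_mul, ih, hu]
    simp only [mul_add, add_mul, smul_mul_assoc, hN, add_smul, one_mul, mul_one, smul_zero,
      one_smul, add_zero, add_assoc]
  | pred e ih =>
    rw [zpow_sub_one, Units.val_mul, ih, hinv]
    simp only [mul_sub, add_mul, smul_mul_assoc, hN, sub_smul, one_mul, mul_one, smul_zero,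
      one_smul, add_zero, add_sub_assoc]

theorem exists_intCast_zmod_pow_ne_zero {p : ℕ} (hp : 1 < p) {E : ℤ} (hE : E ≠ 0) :
    ∃ m : ℕ, (E : ZMod (p ^ m)) ≠ 0 := by
  refine ⟨E.natAbs, fun h => hE ?_⟩
  rw [ZMod.intCast_zmod_eq_zero_iff_dvd] at h
  refine Int.eq_zero_of_abs_lt_dvd h ?_
  rw [Int.abs_eq_natAbs]
  exact_mod_cast Nat.lt_pow_self hp

section FreeGroup

variable {X : Type*}

theorem freeGroup_exists_eq_prod_zpow (g : FreeGroup X) :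
    ∃ (n : ℕ) (x : Fin n → X) (e : Fin n → ℤ),
      (∀ k l : Fin n, (k : ℕ) + 1 = l → x k ≠ x l) ∧ (∀ k, e k ≠ 0) ∧
        g = (List.ofFn fun k => FreeGroup.of (x k) ^ e k).prod := by
  classical
  let π : Monoid.CoprodI (fun _ : X => Multiplicative ℤ) →* FreeGroup X :=
    Monoid.CoprodI.lift fun x => zpowersHom _ (FreeGroup.of x)
  have hπ : Function.Surjective π := by
    rw [← MonoidHom.range_eq_top, eq_top_iff, ← FreeGroup.closure_range_of,
      Subgroup.closure_le]
    rintro _ ⟨x, rfl⟩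
    exact ⟨Monoid.CoprodI.of (i := x) (Multiplicative.ofAdd 1), by simp [π]⟩
  obtain ⟨c, rfl⟩ := hπ g
  obtain ⟨w, rfl⟩ := Monoid.CoprodI.Word.equiv.symm.surjective c
  refine ⟨w.toList.length, fun k => w.toList[k].1, fun k => w.toList[k].2.toAdd, ?_, ?_, ?_⟩
  · rintro k ⟨_, hl⟩ rfl
    exact List.isChain_iff_getElem.1 w.chain_ne k hl
  · exact fun k hk => w.ne_one _ (List.getElem_mem k.2) (Multiplicative.toAdd.injective hk)
  · have hsyllable : π ∘ (fun a : (_ : X) × Multiplicative ℤ => Monoid.CoprodI.of (i := a.1) a.2) =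
        fun a => FreeGroup.of a.1 ^ a.2.toAdd := by
      ext a : 1
      simp [π]
    change π (w.toList.map _).prod = _
    rw [map_list_prod, List.map_map, hsyllable]
    exact congrArg List.prod (List.ofFn_getElem_eq_map _ _).symm

section Magnus

open unitriangularGroup

variable (R : Type*) [CommRing R] {n : ℕ} (x : Fin n → X)

open Classical in
/-- The nilpotent part of the matrix assigned to the letter `y` by `magnusHom`: the superdiagonal
marks the places where `y` occurs in the sequence of letters `x`. -/
noncomputable def magnusNilpotent (y : X) : Matrix (Fin (n + 1)) (Fin (n + 1)) R :=
  superdiagonal fun k => if x k = y then 1 else 0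

/-- Magnus' unitriangular representation of the free group adapted to a sequence of letters `x`. It
is designed to detect the products `x₁ ^ e₁ * ⋯ * xₙ ^ eₙ`. -/
noncomputable def magnusHom : FreeGroup X →* unitriangularGroup (Fin (n + 1)) R :=
  FreeGroup.lift fun y =>
    ofMatrix (1 + magnusNilpotent R x y) (isUnitriangular_one_add_superdiagonal _)

variable {x}

theorem magnusNilpotent_mul_self (hx : ∀ k l : Fin n, (k : ℕ) + 1 = l → x k ≠ x l) (y : X) :
    magnusNilpotent R x y * magnusNilpotent R x y = 0 := by
  refine superdiagonal_mul_superdiagonal_eq_zero fun k l hkl => ?_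
  have hkl_ne := hx k l hkl
  split_ifs <;> simp_all

theorem toMatrix_magnusHom_of_zpow (hx : ∀ k l : Fin n, (k : ℕ) + 1 = l → x k ≠ x l) (y : X)
    (e : ℤ) : toMatrix (magnusHom R x (FreeGroup.of y ^ e)) = 1 + e • magnusNilpotent R x y := by
  rw [map_zpow]
  refine units_zpow_val_of_mul_self_eq_zero (magnusNilpotent_mul_self R hx y) ?_ e
  rw [magnusHom, FreeGroup.lift_apply_of]
  exact toMatrix_ofMatrix (isUnitriangular_one_add_superdiagonal _)

theorem toMatrix_magnusHom_prod_zpow_apply (hx : ∀ k l : Fin n, (k : ℕ) + 1 = l → x k ≠ x l)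
    (e : Fin n → ℤ) :
    toMatrix (magnusHom R x (List.ofFn fun k => FreeGroup.of (x k) ^ e k).prod) 0 (Fin.last n) =
      ((∏ k, e k : ℤ) : R) := by
  have hband (k : Fin n) : HasUpperBandwidth 1 (1 + e k • magnusNilpotent R x (x k)) :=
    hasUpperBandwidth_one_add_zsmul_superdiagonal _ _
  have hentry (k : Fin n) : (1 + e k • magnusNilpotent R x (x k)) k.castSucc k.succ = e k := by
    rw [magnusNilpotent, one_add_zsmul_superdiagonal_apply_castSucc_succ, if_pos rfl, zsmul_one]
  simp only [map_list_prod, List.map_ofFn, Function.comp_def, toMatrix_magnusHom_of_zpow R hx,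
    HasUpperBandwidth.list_prod_ofFn_apply_zero_last hband, hentry, Int.cast_prod]

end Magnus

variable (X) in
theorem residuallyPFinite_freeGroup {p : ℕ} (hp : 1 < p) :
    ResiduallyPFinite p (FreeGroup X) := by
  intro g hg
  obtain ⟨n, x, e, hx, he, rfl⟩ := freeGroup_exists_eq_prod_zpow g
  have hn : (0 : Fin (n + 1)) ≠ Fin.last n := by
    intro h
    obtain rfl : n = 0 := (congrArg Fin.val h).symm
    exact hg rfl
  obtain ⟨m, hm⟩ := exists_intCast_zmod_pow_ne_zero hp (Finset.prod_ne_zero_iff.2 fun k _ => he k)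
  refine ⟨unitriangularGroup (Fin (n + 1)) (ZMod (p ^ m)), inferInstance, magnusHom _ x, ?_, ?_⟩
  · rw [unitriangularGroup.natCard, Nat.card_zmod, ← pow_mul]
    exact ⟨_, rfl⟩
  · intro htriv
    apply hm
    rw [← toMatrix_magnusHom_prod_zpow_apply _ hx, htriv, map_one, Matrix.one_apply_ne hn]

end FreeGroup

/-- The action of `G` on the free group on a `G`-set by permuting the basis. -/
def freeGroupPermAut (G X : Type*) [Group G] [MulAction G X] : G →* MulAut (FreeGroup X) where
  toFun g := FreeGroup.freeGroupCongr (MulAction.toPerm g)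
  map_one' := MulEquiv.toMonoidHom_injective (by ext x; simp)
  map_mul' g h := MulEquiv.toMonoidHom_injective (by ext x; simp [mul_smul])

theorem freeGroupPermAut_apply_of {G X : Type*} [Group G] [MulAction G X] (g : G) (x : X) :
    freeGroupPermAut G X g (FreeGroup.of x) = FreeGroup.of (g • x) :=
  rfl

section CentralizedHNN

variable {G : Type*} [Group G]

/-- The HNN extension `⟨G, t | t⁻¹ht = h for all h ∈ H⟩`, whose stable letter centralizes `H`. -/
abbrev CentralizedHNN (H : Subgroup G) : Type _ :=
  HNNExtension G H H (MulEquiv.refl H)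

namespace CentralizedHNN

open HNNExtension

variable (H : Subgroup G)

variable {H} in
theorem of_mul_t_mul_of_inv_eq {g g' : G} (h : g⁻¹ * g' ∈ H) :
    (of g * t * of g⁻¹ : CentralizedHNN H) = of g' * t * of g'⁻¹ := by
  have hcomm : (t : CentralizedHNN H) * of (g⁻¹ * g') = of (g⁻¹ * g') * t :=
    t_mul_of (φ := MulEquiv.refl H) ⟨_, h⟩
  calc (of g * t * of g⁻¹ : CentralizedHNN H)
      = of g * (t * of (g⁻¹ * g')) * of g'⁻¹ := by simp [mul_assoc]
    _ = of g' * t * of g'⁻¹ := by rw [hcomm]; simp [mul_assoc]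

/-- The conjugate `g t g⁻¹` of the stable letter, as a function of the coset `gH`. -/
def tConj : G ⧸ H → CentralizedHNN H :=
  Quotient.lift (fun g => of g * t * of g⁻¹)
    fun _ _ h => of_mul_t_mul_of_inv_eq (QuotientGroup.leftRel_apply.1 h)

theorem tConj_mk (g : G) : tConj H (g : G ⧸ H) = of g * t * of g⁻¹ :=
  rfl

theorem tConj_one : tConj H ((1 : G) : G ⧸ H) = t := by
  simp [tConj_mk]

theorem tConj_smul (g : G) (x : G ⧸ H) : tConj H (g • x) = of g * tConj H x * (of g)⁻¹ := by
  obtain ⟨g', rfl⟩ := QuotientGroup.mk_surjective x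
  rw [MulAction.Quotient.smul_coe, tConj_mk, tConj_mk]
  simp [mul_assoc]

/-- The homomorphism that sends the stable letter to the basis element `H` and is the identity
on `G`. -/
def toSemidirect : CentralizedHNN H →* FreeGroup (G ⧸ H) ⋊[freeGroupPermAut G (G ⧸ H)] G :=
  lift SemidirectProduct.inr (SemidirectProduct.inl (FreeGroup.of ((1 : G) : G ⧸ H))) fun h => by
    have hfix : (h : G) • ((1 : G) : G ⧸ H) = ((1 : G) : G ⧸ H) := by
      simp [QuotientGroup.eq]
    ext <;> simp [freeGroupPermAut_apply_of, hfix]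

/-- The homomorphism that sends the basis element `gH` to `g t g⁻¹` and is the identity on `G`. -/
def ofSemidirect : FreeGroup (G ⧸ H) ⋊[freeGroupPermAut G (G ⧸ H)] G →* CentralizedHNN H :=
  SemidirectProduct.lift (FreeGroup.lift (tConj H)) of fun g => by
    ext x
    simp [freeGroupPermAut_apply_of, tConj_smul]

theorem ofSemidirect_comp_toSemidirect :
    (ofSemidirect H).comp (toSemidirect H) = MonoidHom.id _ := by
  ext <;> simp [ofSemidirect, toSemidirect, tConj_one]

theorem toSemidirect_comp_ofSemidirect :
    (toSemidirect H).comp (ofSemidirect H) = MonoidHom.id _ := by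
  refine SemidirectProduct.hom_ext (FreeGroup.ext_hom _ _ fun x => ?_) ?_
  · obtain ⟨g, rfl⟩ := QuotientGroup.mk_surjective x
    have hg : (g : G ⧸ H) = g • ((1 : G) : G ⧸ H) := by
      simp
    simp only [ofSemidirect, toSemidirect, MonoidHom.comp_apply, MonoidHom.id_apply,
      SemidirectProduct.lift_inl, FreeGroup.lift_apply_of, tConj_mk, map_mul, lift_of, lift_t]
    rw [← SemidirectProduct.inl_aut, freeGroupPermAut_apply_of, ← hg]
  · ext g : 1
    simp [ofSemidirect, toSemidirect]

/-- The decomposition of the HNN extension as a semidirect product of `G` with the free group on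
the conjugates of the stable letter. -/
def mulEquivSemidirect :
    CentralizedHNN H ≃* FreeGroup (G ⧸ H) ⋊[freeGroupPermAut G (G ⧸ H)] G :=
  (toSemidirect H).toMulEquiv (ofSemidirect H) (ofSemidirect_comp_toSemidirect H)
    (toSemidirect_comp_ofSemidirect H)

end CentralizedHNN

end CentralizedHNN

theorem HNN_of_finite_p_group_residually_p_finite (p : ℕ) (hp : p.Prime)
    (G : Type) [Group G] [Finite G] (hG : ∃ k : ℕ, Nat.card G = p ^ k)
    (H : Subgroup G) :
    ResiduallyPFinite p (HNNExtension G H H (MulEquiv.refl H)) := by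
  have : Fact p.Prime := ⟨hp⟩
  have hFree : ResiduallyPFinite p (FreeGroup (G ⧸ H)) :=
    residuallyPFinite_freeGroup _ hp.one_lt
  have hSemidirect := hFree.semidirectProduct (IsPGroup.iff_card.2 hG)
    (freeGroupPermAut G (G ⧸ H))
  exact hSemidirect.of_injective (CentralizedHNN.mulEquivSemidirect H).toMonoidHom
    (CentralizedHNN.mulEquivSemidirect H).injective
end

section
/- Let p be a prime number, let G be a group, and let H be a subgroup of G that is closed in the pro-p topology on G. Let Γ = ⟨G, t | t⁻¹ht = h for all h ∈ H⟩ be the HNN extension of G with both associated subgroups equal to H and with the identity isomorphism. If G is residually p-finite, then Γ is residually p-finite. -/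
open scoped Pointwise
/-- A subgroup `H` of `G` is closed in the pro-`p` topology on `G` if for every `g ∉ H`
there is a normal subgroup `N` of `G` of `p`-power index with `g ∉ NH`. -/
def ClosedInProP (p : ℕ) {G : Type*} [Group G] (H : Subgroup G) : Prop :=
  ∀ g : G, g ∉ H → ∃ N : Subgroup G, N.Normal ∧ (∃ k : ℕ, N.index = p ^ k) ∧
    g ∉ (N : Set G) * (H : Set G)

/-!
The HNN extension `Γ` is the semidirect product `F(G ⧸ H) ⋊ G`, with `t` corresponding to the basis
element `H`. Suppose a group `G` acts on a set `X`, and a normal subgroup `N` of `p`-power index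
separates the letters of a word `u ≠ 1` into distinct orbits. The preimage of `N` in `F(X) ⋊ G` is
normal of `p`-power index, and it maps onto the free group `F(X / N)`, where `u` is still
nontrivial; normal cores then carry a finite `p`-quotient of that preimage over to `F(X) ⋊ G`.

The same step shows that free groups are residually `p`-finite, by induction on word length: writing
`F(X)` inside `F(X × ℤ) ⋊ ℤ`, with the first letter of `u` sent to the generator of `ℤ`,
shortens `u`.
-/

/-- The open normal subgroups of the pro-`p` topology: those of `p`-power index. -/
structure OpenNormalInProP (p : ℕ) {G : Type*} [Group G] (N : Subgroup G) : Prop where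
  normal : N.Normal
  index_eq_pow : ∃ k : ℕ, N.index = p ^ k

/-- An element that survives in some finite `p`-quotient, expressed through the kernel of the
quotient map so that no universe has to be fixed for the quotient. -/
def IsPDetectable (p : ℕ) {G : Type*} [Group G] (g : G) : Prop :=
  ∃ N : Subgroup G, OpenNormalInProP p N ∧ g ∉ N

/-- An action whose distinct points lie in distinct orbits of some open normal subgroup of the
pro-`p` topology. -/
def ProPSeparatedAction (p : ℕ) (G X : Type*) [Group G] [MulAction G X] : Prop :=
  ∀ x y : X, x ≠ y → ∃ N : Subgroup G, OpenNormalInProP p N ∧ ∀ n ∈ N, n • x ≠ y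

variable {p : ℕ} {G G' : Type*} [Group G] [Group G']

namespace OpenNormalInProP

theorem top : OpenNormalInProP p (⊤ : Subgroup G) :=
  ⟨inferInstance, 0, by simp⟩

theorem exists_pow_mem {N : Subgroup G} (hN : OpenNormalInProP p N) :
    ∃ k : ℕ, ∀ g : G, g ^ p ^ k ∈ N := by
  obtain ⟨hnormal, k, hk⟩ := hN
  exact ⟨k, fun g => hk ▸ N.pow_index_mem g⟩

theorem finiteIndex [NeZero p] {N : Subgroup G} (hN : OpenNormalInProP p N) : N.FiniteIndex := by
  obtain ⟨k, hk⟩ := hN.index_eq_pow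
  exact ⟨hk ▸ pow_ne_zero k (NeZero.ne p)⟩

variable [Fact p.Prime]

theorem of_pow_mem (N : Subgroup G) [hN : N.Normal] [N.FiniteIndex]
    (hpow : ∀ g : G, ∃ k : ℕ, g ^ p ^ k ∈ N) : OpenNormalInProP p N := by
  refine ⟨hN, IsPGroup.iff_card.mp fun q => ?_⟩
  obtain ⟨g, rfl⟩ := QuotientGroup.mk_surjective q
  obtain ⟨k, hk⟩ := hpow g
  exact ⟨k, (QuotientGroup.eq_one_iff _).mpr hk⟩

theorem inf {M N : Subgroup G} (hM : OpenNormalInProP p M) (hN : OpenNormalInProP p N) :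
    OpenNormalInProP p (M ⊓ N) := by
  have := hM.normal
  have := hN.normal
  have := hM.finiteIndex
  have := hN.finiteIndex
  obtain ⟨a, ha⟩ := hM.exists_pow_mem
  obtain ⟨b, hb⟩ := hN.exists_pow_mem
  refine of_pow_mem _ fun g => ⟨a + b, ?_, ?_⟩
  · rw [pow_add, pow_mul]
    exact M.pow_mem (ha g) _
  · rw [pow_add, mul_comm, pow_mul]
    exact N.pow_mem (hb g) _

theorem comap {N : Subgroup G'} (hN : OpenNormalInProP p N) (f : G →* G') :
    OpenNormalInProP p (N.comap f) := by
  obtain ⟨hnormal, k, hk⟩ := hN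
  refine ⟨inferInstance, ?_⟩
  have hdvd : (N.comap f).index ∣ p ^ k := by
    rw [Subgroup.index_comap, ← hk]
    exact N.relIndex_dvd_index_of_normal f.range
  obtain ⟨j, -, hj⟩ := (Nat.dvd_prime_pow Fact.out).mp hdvd
  exact ⟨j, hj⟩

theorem normalCore_map_subtype {K : Subgroup G} (hK : OpenNormalInProP p K) {L : Subgroup K}
    (hL : OpenNormalInProP p L) : OpenNormalInProP p (L.map K.subtype).normalCore := by
  have := hK.finiteIndex
  have := hL.finiteIndex
  have : (L.map K.subtype).FiniteIndex := by
    rw [Subgroup.finiteIndex_iff, Subgroup.index_map_subtype]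
    exact mul_ne_zero L.index_ne_zero_of_finite K.index_ne_zero_of_finite
  obtain ⟨a, ha⟩ := hK.exists_pow_mem
  obtain ⟨b, hb⟩ := hL.exists_pow_mem
  have hpow (g : G) : g ^ p ^ (a + b) ∈ L.map K.subtype :=
    ⟨⟨g ^ p ^ a, ha g⟩ ^ p ^ b, hb _, by simp [pow_add, pow_mul]⟩
  -- The exponent is uniform in `g`, hence also serves all conjugates of `g`.
  refine of_pow_mem _ fun g => ⟨a + b, fun c => ?_⟩
  rw [← conj_pow]
  exact hpow (c * g * c⁻¹)

end OpenNormalInProP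

namespace IsPDetectable

variable [Fact p.Prime]

theorem of_map (f : G →* G') {g : G} (h : IsPDetectable p (f g)) : IsPDetectable p g := by
  obtain ⟨N, hN, hg⟩ := h
  exact ⟨N.comap f, hN.comap f, hg⟩

theorem coe {K : Subgroup G} (hK : OpenNormalInProP p K) {g : K} (h : IsPDetectable p g) :
    IsPDetectable p (g : G) := by
  obtain ⟨L, hL, hg⟩ := h
  refine ⟨_, hK.normalCore_map_subtype hL, fun hcore => hg ?_⟩
  exact (Subgroup.mem_map_iff_mem K.subtype_injective).mp (Subgroup.normalCore_le _ hcore)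

end IsPDetectable

section Residual

variable [Fact p.Prime]

theorem residuallyPFinite_iff_forall_isPDetectable :
    ResiduallyPFinite p G ↔ ∀ g : G, g ≠ 1 → IsPDetectable p g := by
  refine forall₂_congr fun g _ => ⟨?_, ?_⟩
  · rintro ⟨P, _, f, hcard, hfg⟩
    have hbot : OpenNormalInProP p (⊥ : Subgroup P) := ⟨inferInstance, by simpa using hcard⟩
    exact .of_map f ⟨⊥, hbot, hfg⟩
  · rintro ⟨N, hN, hg⟩
    have := hN.normal
    have := hN.finiteIndex
    refine ⟨Shrink.{0} (G ⧸ N), inferInstance,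
      Shrink.mulEquiv.symm.toMonoidHom.comp (QuotientGroup.mk' N), ?_, ?_⟩
    · rw [← Nat.card_congr (equivShrink.{0} (G ⧸ N))]
      exact hN.index_eq_pow
    · simpa using hg

theorem ResiduallyPFinite.of_injective_s3 (hG' : ResiduallyPFinite p G') (f : G →* G')
    (hf : Function.Injective f) : ResiduallyPFinite p G := by
  rw [residuallyPFinite_iff_forall_isPDetectable] at hG' ⊢
  exact fun g hg => .of_map f (hG' _ ((map_ne_one_iff f hf).mpr hg))

theorem residuallyPFinite_multiplicative_int : ResiduallyPFinite p (Multiplicative ℤ) := by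
  intro n hn
  refine ⟨Multiplicative (ZMod (p ^ n.toAdd.natAbs)), inferInstance,
    (Int.castAddHom _).toMultiplicative, ⟨n.toAdd.natAbs, by simp⟩, fun h => ?_⟩
  have hdvd : ((p ^ n.toAdd.natAbs : ℕ) : ℤ) ∣ n.toAdd :=
    (ZMod.intCast_zmod_eq_zero_iff_dvd _ _).mp h
  have hle := Nat.le_of_dvd (Int.natAbs_pos.mpr hn) (Int.natCast_dvd.mp hdvd)
  exact hle.not_gt (Nat.lt_pow_self (Nat.Prime.one_lt Fact.out))

end Residual

section FreeGroup

variable {X Y : Type*} [DecidableEq X]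

theorem freeGroup_norm_map_le [DecidableEq Y] (f : X → Y) (u : FreeGroup X) :
    (FreeGroup.map f u).norm ≤ u.norm := by
  rw [← FreeGroup.mk_toWord (x := u), FreeGroup.map.mk, FreeGroup.mk_toWord]
  exact FreeGroup.norm_mk_le.trans_eq (List.length_map _)

theorem freeGroup_map_ne_one_of_injOn {f : X → Y} {u : FreeGroup X} (hu : u ≠ 1)
    (hf : Set.InjOn f {x | x ∈ u.toWord.map Prod.fst}) : FreeGroup.map f u ≠ 1 := by
  classical
  have hreduced : FreeGroup.IsReduced (u.toWord.map fun a => (f a.1, a.2)) := by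
    refine (List.isChain_map _).mpr (FreeGroup.isReduced_toWord.imp_of_mem_imp ?_)
    intro a b ha hb hab heq
    exact hab (hf (List.mem_map_of_mem ha) (List.mem_map_of_mem hb) heq)
  rw [← FreeGroup.mk_toWord (x := u), FreeGroup.map.mk, Ne, ← FreeGroup.toWord_eq_nil_iff,
    FreeGroup.toWord_mk, hreduced.reduce_eq, List.map_eq_nil_iff, FreeGroup.toWord_eq_nil_iff]
  exact hu

end FreeGroup

theorem ProPSeparatedAction.exists_injOn_orbitQuotient [Fact p.Prime] {X : Type*} [MulAction G X]
    (hX : ProPSeparatedAction p G X) {S : Set X} (hS : S.Finite) :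
    ∃ N : Subgroup G, OpenNormalInProP p N ∧
      S.InjOn (Quotient.mk'' : X → MulAction.orbitRel.Quotient N X) := by
  classical
  have hpair (a : X × X) : ∃ N : Subgroup G, OpenNormalInProP p N ∧
      (a.1 ≠ a.2 → ∀ n ∈ N, n • a.1 ≠ a.2) := by
    by_cases ha : a.1 = a.2
    · exact ⟨⊤, .top, fun hne => (hne ha).elim⟩
    · obtain ⟨N, hN, hsep⟩ := hX a.1 a.2 ha
      exact ⟨N, hN, fun _ => hsep⟩
  choose N hN hsep using hpair
  let pairs := hS.toFinset ×ˢ hS.toFinset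
  refine ⟨pairs.inf N, Finset.inf_induction .top (fun _ hM _ => hM.inf) fun a _ => hN a, ?_⟩
  intro x hx y hy hxy
  obtain ⟨n, hn⟩ := MulAction.orbitRel_apply.mp (Quotient.exact hxy.symm)
  by_contra hne
  have hpairs : (x, y) ∈ pairs := by simp [pairs, hx, hy]
  have hle : pairs.inf N ≤ N (x, y) := Finset.inf_le hpairs
  exact hsep (x, y) hne n (hle n.2) hn

theorem proPSeparatedAction_sigma_self (ι : Type*) [Fact p.Prime] (hG : ResiduallyPFinite p G) :
    ProPSeparatedAction p G (Σ _ : ι, G) := by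
  rintro ⟨i, g⟩ ⟨j, h⟩ hne
  by_cases hgh : h * g⁻¹ = 1
  · obtain rfl := mul_inv_eq_one.mp hgh
    refine ⟨⊤, .top, fun n _ heq => hne ?_⟩
    obtain rfl : i = j := congrArg Sigma.fst heq
    rfl
  · obtain ⟨N, hN, hmem⟩ := residuallyPFinite_iff_forall_isPDetectable.mp hG _ hgh
    refine ⟨N, hN, fun n hn heq => hmem ?_⟩
    obtain rfl : n * g = h := eq_of_heq (Sigma.mk.inj heq).2
    simpa using hn

theorem ClosedInProP.proPSeparatedAction_quotient {H : Subgroup G} (hH : ClosedInProP p H) :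
    ProPSeparatedAction p G (G ⧸ H) := by
  intro x y hne
  induction x, y using Quotient.inductionOn₂' with | _ a b
  have hab : a⁻¹ * b ∉ H := fun h => hne (QuotientGroup.eq.mpr h)
  obtain ⟨N, hnormal, hindex, hmem⟩ := hH _ hab
  refine ⟨N, ⟨hnormal, hindex⟩, fun n hn heq => hmem ?_⟩
  have hcoset : (n * a)⁻¹ * b ∈ H := QuotientGroup.eq.mp heq
  exact ⟨a⁻¹ * n * a, by simpa using hnormal.conj_mem n hn a⁻¹, _, hcoset, by group⟩

/-- The automorphisms of the free group on a `G`-set induced by the action on its basis. -/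
def freeGroupPermute (G X : Type*) [Group G] [MulAction G X] : G →* MulAut (FreeGroup X) where
  toFun g := FreeGroup.freeGroupCongr (MulAction.toPerm g)
  map_one' := by
    rw [← MulAction.toPermHom_apply, map_one]
    exact FreeGroup.freeGroupCongr_refl
  map_mul' g h := by
    simp only [← MulAction.toPermHom_apply, map_mul]
    exact (FreeGroup.freeGroupCongr_trans _ _).symm

/-- The semidirect product `F(X) ⋊ G` in which `G` permutes the basis `X`. -/
abbrev FreeSemidirect (G X : Type*) [Group G] [MulAction G X] :=
  FreeGroup X ⋊[freeGroupPermute G X] G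

section Semidirect

variable {X : Type*} [MulAction G X]

theorem freeGroupPermute_apply (g : G) (u : FreeGroup X) :
    freeGroupPermute G X g u = FreeGroup.map (g • ·) u :=
  rfl

/-- The homomorphism `F(X) → F(X / N)` induced by the projection onto the `N`-orbits. -/
def freeGroupToOrbits (N : Subgroup G) :
    FreeGroup X →* FreeGroup (MulAction.orbitRel.Quotient N X) :=
  FreeGroup.map Quotient.mk''

theorem freeGroupToOrbits_permute {N : Subgroup G} {n : G} (hn : n ∈ N) (u : FreeGroup X) :
    freeGroupToOrbits N (freeGroupPermute G X n u) = freeGroupToOrbits N u := by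
  rw [freeGroupPermute_apply, freeGroupToOrbits, FreeGroup.map.comp]
  congr 2
  ext x
  exact MulAction.orbitRel.Quotient.quotient_smul_eq (g := (⟨n, hn⟩ : N))

/-- The homomorphism `F(X) ⋊ N → F(X / N)` killing `N`, with `F(X) ⋊ N` realised as the preimage of
`N` in `F(X) ⋊ G`. -/
def freeSemidirectToOrbits (X : Type*) [MulAction G X] (N : Subgroup G) :
    N.comap (SemidirectProduct.rightHom : FreeSemidirect G X →* G) →*
      FreeGroup (MulAction.orbitRel.Quotient N X) where
  toFun w := freeGroupToOrbits N w.1.left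
  map_one' := map_one _
  map_mul' v w := by
    have hv : v.1.right ∈ N := v.2
    simp only [Subgroup.coe_mul, SemidirectProduct.mul_left, map_mul, freeGroupToOrbits_permute hv]

variable [Fact p.Prime]

theorem ProPSeparatedAction.exists_freeGroupToOrbits_ne_one (hX : ProPSeparatedAction p G X)
    {u : FreeGroup X} (hu : u ≠ 1) :
    ∃ N : Subgroup G, OpenNormalInProP p N ∧ freeGroupToOrbits N u ≠ 1 := by
  classical
  obtain ⟨N, hN, hinj⟩ :=
    hX.exists_injOn_orbitQuotient (u.toWord.map Prod.fst).finite_toSet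
  exact ⟨N, hN, freeGroup_map_ne_one_of_injOn hu hinj⟩

theorem isPDetectable_freeSemidirect (hG : ResiduallyPFinite p G) (hX : ProPSeparatedAction p G X)
    {w : FreeSemidirect G X} (hw : w ≠ 1)
    (hfree : ∀ N : Subgroup G, freeGroupToOrbits N w.left ≠ 1 →
      IsPDetectable p (freeGroupToOrbits N w.left)) :
    IsPDetectable p w := by
  by_cases hright : w.right = 1
  · have hleft : w.left ≠ 1 := fun h => hw (SemidirectProduct.ext h hright)
    obtain ⟨N, hN, hne⟩ := hX.exists_freeGroupToOrbits_ne_one hleft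
    have hmem : w ∈ N.comap SemidirectProduct.rightHom := by simp [hright]
    have hdetect : IsPDetectable p (⟨w, hmem⟩ : N.comap SemidirectProduct.rightHom) :=
      .of_map (freeSemidirectToOrbits X N) (hfree N hne)
    exact hdetect.coe (hN.comap _)
  · exact .of_map SemidirectProduct.rightHom
      (residuallyPFinite_iff_forall_isPDetectable.mp hG _ hright)

theorem norm_freeGroupPermute_le [DecidableEq X] (g : G) (u : FreeGroup X) :
    (freeGroupPermute G X g u).norm ≤ u.norm :=
  freeGroup_norm_map_le _ u

end Semidirect

section ExtractGenerator

variable {X : Type*}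

/-- The homomorphism `F(X × ℤ) ⋊ ℤ → F(X)` substituting `xⁿ y x⁻ⁿ` for `(y, n)` and `x` for the
generator of `ℤ`. The product is written as a sigma type, on which `ℤ` acts by translating the
second component only. -/
def insertGenerator (x : X) :
    FreeSemidirect (Multiplicative ℤ) (Σ _ : X, Multiplicative ℤ) →* FreeGroup X :=
  SemidirectProduct.lift
    (FreeGroup.lift fun a => MulAut.conj (zpowersHom _ (.of x) a.2) (.of a.1))
    (zpowersHom _ (.of x))
    (fun n => by ext ⟨y, m⟩; simp [freeGroupPermute_apply, zpow_add])

variable [DecidableEq X]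

/-- The embedding `F(X) → F(X × ℤ) ⋊ ℤ` sending `x` to the generator of `ℤ` and every other basis
element `y` to `(y, 0)`; `insertGenerator x` is a retraction of it. -/
def extractGenerator (x : X) :
    FreeGroup X →* FreeSemidirect (Multiplicative ℤ) (Σ _ : X, Multiplicative ℤ) :=
  FreeGroup.lift fun y =>
    if y = x then SemidirectProduct.inr (.ofAdd 1) else SemidirectProduct.inl (.of ⟨y, 1⟩)

theorem extractGenerator_injective (x : X) : Function.Injective (extractGenerator x) := by
  have hretract : (insertGenerator x).comp (extractGenerator x) = MonoidHom.id _ := by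
    ext y
    by_cases hy : y = x <;> simp [insertGenerator, extractGenerator, hy]
  exact Function.HasLeftInverse.injective ⟨insertGenerator x, DFunLike.congr_fun hretract⟩

theorem norm_left_extractGenerator_letter_le (x y : X) (b : Bool) :
    (extractGenerator x (.mk [(y, b)])).left.norm ≤ if y = x then 0 else 1 := by
  cases b <;> by_cases hy : y = x <;> simp [extractGenerator, hy]

theorem norm_left_extractGenerator_mk_cons_le (x y : X) (b : Bool) (L : List (X × Bool)) :
    (extractGenerator x (.mk ((y, b) :: L))).left.norm ≤
      (extractGenerator x (.mk [(y, b)])).left.norm + (extractGenerator x (.mk L)).left.norm := by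
  rw [← List.singleton_append, ← FreeGroup.mul_mk, map_mul, SemidirectProduct.mul_left]
  exact (FreeGroup.norm_mul_le _ _).trans (by gcongr; exact norm_freeGroupPermute_le _ _)

theorem norm_left_extractGenerator_mk_le (x : X) (L : List (X × Bool)) :
    (extractGenerator x (.mk L)).left.norm ≤ L.length := by
  induction L with
  | nil => simp [← FreeGroup.one_eq_mk]
  | cons a L ih =>
    have hletter : (extractGenerator x (.mk [a])).left.norm ≤ 1 :=
      (norm_left_extractGenerator_letter_le x a.1 a.2).trans (by split_ifs <;> simp)
    calc
      _ ≤ _ := norm_left_extractGenerator_mk_cons_le x a.1 a.2 L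
      _ ≤ 1 + L.length := add_le_add hletter ih
      _ = (a :: L).length := add_comm _ _

theorem exists_norm_left_extractGenerator_lt {u : FreeGroup X} (hu : u ≠ 1) :
    ∃ x : X, (extractGenerator x u).left.norm < u.norm := by
  obtain ⟨⟨x, b⟩, L, hL⟩ := List.exists_cons_of_ne_nil (mt FreeGroup.toWord_eq_nil_iff.mp hu)
  have hletter : (extractGenerator x (.mk [(x, b)])).left.norm ≤ 0 := by
    simpa using norm_left_extractGenerator_letter_le x x b
  refine ⟨x, ?_⟩
  calc
    (extractGenerator x u).left.norm = (extractGenerator x (.mk ((x, b) :: L))).left.norm := by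
      rw [← hL, FreeGroup.mk_toWord]
    _ ≤ _ := norm_left_extractGenerator_mk_cons_le x x b L
    _ ≤ 0 + L.length := add_le_add hletter (norm_left_extractGenerator_mk_le x L)
    _ < u.norm := by simp [FreeGroup.norm, hL]

end ExtractGenerator

theorem isPDetectable_freeGroup [Fact p.Prime] {X : Type*} {u : FreeGroup X} (hu : u ≠ 1) :
    IsPDetectable p u := by
  have : DecidableEq X := Classical.decEq X
  induction hn : u.norm using Nat.strong_induction_on generalizing X with | _ n ih
  classical
  obtain ⟨x, hlt⟩ := exists_norm_left_extractGenerator_lt hu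
  have hℤ : ResiduallyPFinite p (Multiplicative ℤ) := residuallyPFinite_multiplicative_int
  refine .of_map (extractGenerator x) (isPDetectable_freeSemidirect hℤ
    (proPSeparatedAction_sigma_self X hℤ)
    ((map_ne_one_iff _ (extractGenerator_injective x)).mpr hu) fun N hne => ?_)
  exact ih _ (((freeGroup_norm_map_le _ _).trans_lt hlt).trans_eq hn) hne _ rfl

theorem ResiduallyPFinite.freeSemidirect [Fact p.Prime] {X : Type*} [MulAction G X]
    (hG : ResiduallyPFinite p G) (hX : ProPSeparatedAction p G X) :
    ResiduallyPFinite p (FreeSemidirect G X) :=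
  residuallyPFinite_iff_forall_isPDetectable.mpr fun _ hw =>
    isPDetectable_freeSemidirect hG hX hw fun _ => isPDetectable_freeGroup

section HNN

variable (H : Subgroup G)

/-- The embedding of the HNN extension with identity isomorphism into `F(G ⧸ H) ⋊ G`, sending the
stable letter to the basis element `H`. -/
def hnnToFreeSemidirect : HNNExtension G H H (MulEquiv.refl H) →* FreeSemidirect G (G ⧸ H) :=
  HNNExtension.lift SemidirectProduct.inr (SemidirectProduct.inl (.of ((1 : G) : G ⧸ H)))
    fun h => by
      have hfix : (h : G) • ((1 : G) : G ⧸ H) = (1 : G) := by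
        rw [MulAction.Quotient.smul_coe, QuotientGroup.eq]
        simp
      ext <;> simp [freeGroupPermute_apply, hfix]

theorem commute_t_of (h : H) :
    Commute (HNNExtension.t : HNNExtension G H H (MulEquiv.refl H)) (HNNExtension.of (h : G)) :=
  HNNExtension.t_mul_of h

/-- The conjugate `g t g⁻¹` of the stable letter, which depends only on the coset `g H`. -/
def conjStableLetter : G ⧸ H → HNNExtension G H H (MulEquiv.refl H) :=
  Quotient.lift (fun g => HNNExtension.of g * HNNExtension.t * (HNNExtension.of g)⁻¹)
    fun a b hab => by
      have hmem : a⁻¹ * b ∈ H := QuotientGroup.leftRel_apply.mp hab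
      obtain ⟨h, rfl⟩ : ∃ h : H, b = a * h := ⟨⟨_, hmem⟩, by simp⟩
      simp only [map_mul, mul_inv_rev, mul_assoc]
      rw [(commute_t_of H h).symm.left_comm, mul_inv_cancel_left]

theorem conjStableLetter_mk (g : G) : conjStableLetter H (g : G ⧸ H) =
    HNNExtension.of g * HNNExtension.t * (HNNExtension.of g)⁻¹ :=
  rfl

/-- The retraction of `hnnToFreeSemidirect`, substituting `g t g⁻¹` for the basis element `g H`. -/
def freeSemidirectToHNN : FreeSemidirect G (G ⧸ H) →* HNNExtension G H H (MulEquiv.refl H) :=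
  SemidirectProduct.lift (FreeGroup.lift (conjStableLetter H)) HNNExtension.of fun g => by
    ext x
    induction x using QuotientGroup.induction_on
    simp [freeGroupPermute_apply, conjStableLetter_mk, mul_assoc]

theorem hnnToFreeSemidirect_injective : Function.Injective (hnnToFreeSemidirect H) := by
  have hretract : (freeSemidirectToHNN H).comp (hnnToFreeSemidirect H) = MonoidHom.id _ := by
    ext <;> simp [freeSemidirectToHNN, hnnToFreeSemidirect, conjStableLetter_mk]
  exact Function.HasLeftInverse.injective ⟨freeSemidirectToHNN H, DFunLike.congr_fun hretract⟩

end HNN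

theorem HNN_residually_p_finite_general {p : ℕ} (hp : p.Prime) {G : Type*} [Group G]
    {H : Subgroup G} (hH : ClosedInProP p H) (hG : ResiduallyPFinite p G) :
    ResiduallyPFinite p (HNNExtension G H H (MulEquiv.refl H)) := by
  have := Fact.mk hp
  exact (hG.freeSemidirect hH.proPSeparatedAction_quotient).of_injective_s3
    (hnnToFreeSemidirect H) (hnnToFreeSemidirect_injective H)

theorem HNN_residually_p_finite (p : ℕ) (hp : p.Prime) (G : Type) [Group G]
    (H : Subgroup G) (hH : ClosedInProP p H) (hG : ResiduallyPFinite p G) :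
    ResiduallyPFinite p (HNNExtension G H H (MulEquiv.refl H)) :=
  HNN_residually_p_finite_general hp hH hG
end

section
/- Every right-angled Artin group is residually p-finite for every prime p. That is, if G is the group presented by ⟨X | [x,y] = 1 for all (x,y) ∈ Σ⟩, where X is a finite set and Σ ⊆ X × X, then for every prime p and every g ∈ G with g ≠ 1 there exists a homomorphism from G to a finite p-group under which the image of g is nontrivial. -/
open scoped commutatorElement

/-!
Write a group element as a word `x₁ ^ e₁ ⋯ xₙ ^ eₙ` with as few syllables as possible, and regard
the syllables as pieces stacked in a heap, where pieces with commuting letters slide past one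
another. A letter `x` acts on sets of pieces by `E x`, the sum of the operators dropping one piece
labelled `x`; this is an element of the incidence algebra of the lattice of all sets of pieces.
Commuting letters give commuting operators, and minimality of the word forces `E x ^ 2 = 0`,
because two pieces with the same letter are always separated by a third piece that slides past
neither. So `x ↦ 1 + E x` defines a representation of the group by unipotent units, taking `x ^ e`
to `1 + e • E x`. Each factor of `∏ (1 + eᵢ • E xᵢ)` adds at most one piece, so going from `∅` to
the full heap uses every factor, the `i`-th one dropping the `i`-th piece: that entry is `∏ eᵢ`,
which is nonzero modulo a suitable power of `p`. Over `ℤ / p ^ s` the unipotent units form a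
finite `p`-group.
-/

namespace RightAngledArtin

section Ring

variable {A B : Type*} [Ring A] [Ring B] {p : ℕ}

theorem prime_pow_dvd_one_add_pow_sub {S : Type*} [CommRing S] (hp : p.Prime) (x : S) (m s : ℕ) :
    (p : S) ^ (s + 1) ∣ (1 + x) ^ p ^ (m + s) - (1 + x ^ p ^ m) ^ p ^ s := by
  obtain ⟨r, hr⟩ := exists_add_pow_prime_pow_eq hp 1 x m
  have hdvd : (p : S) ∣ (1 + x) ^ p ^ m - (1 + x ^ p ^ m) :=
    ⟨x * r, by rw [hr, one_pow]; ring⟩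
  rw [pow_add p m s, pow_mul]
  exact dvd_sub_pow_of_dvd_sub hdvd s

open Polynomial in
theorem exists_one_add_pow_prime_pow_eq_one (hp : p.Prime) (hpA : IsNilpotent (p : A)) {a : A}
    (ha : IsNilpotent a) : ∃ k, (1 + a) ^ p ^ k = 1 := by
  obtain ⟨s, hs⟩ := hpA
  obtain ⟨m, hm⟩ := ha
  have ham : a ^ p ^ m = 0 := pow_eq_zero_of_le (Nat.lt_pow_self hp.one_lt).le hm
  obtain ⟨q, hq⟩ := prime_pow_dvd_one_add_pow_sub hp (X : ℤ[X]) m s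
  have heval := congrArg (aeval a) hq
  simp only [map_sub, map_mul, map_pow, map_add, map_one, aeval_X, map_natCast, ham, add_zero,
    one_pow, pow_succ, hs, zero_mul] at heval
  exact ⟨m + s, sub_eq_zero.mp heval⟩

theorem isPGroup_ker_unitsMap (hp : p.Prime) (hpA : IsNilpotent (p : A)) (f : A →+* B)
    (hf : ∀ a, f a = 0 → IsNilpotent a) : IsPGroup p (Units.map (f : A →* B)).ker := by
  rintro ⟨u, hu⟩
  have hfu : f (u - 1) = 0 := by
    simpa [sub_eq_zero, Units.ext_iff] using hu
  obtain ⟨k, hk⟩ := exists_one_add_pow_prime_pow_eq_one hp hpA (hf _ hfu)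
  refine ⟨k, Subtype.ext (Units.ext ?_)⟩
  simpa using hk

/-- The unit `1 + a` attached to an element `a` of square zero. -/
def oneAddUnit (a : A) (ha : a * a = 0) : Aˣ where
  val := 1 + a
  inv := 1 - a
  val_inv := by rw [add_mul, mul_sub, mul_sub, ha]; simp
  inv_val := by rw [sub_mul, mul_add, mul_add, ha]; simp

theorem val_oneAddUnit_zpow (a : A) (ha : a * a = 0) (n : ℤ) :
    ((oneAddUnit a ha ^ n : Aˣ) : A) = 1 + n • a := by
  have hsmul (m : ℤ) : (m • a) * a = 0 := by rw [smul_mul_assoc, ha, smul_zero]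
  induction n with
  | zero => simp
  | succ n ih =>
    rw [zpow_add_one, Units.val_mul, ih, oneAddUnit, mul_add, add_mul _ _ a, hsmul, add_smul]
    simp [add_assoc]
  | pred n ih =>
    rw [zpow_sub_one, Units.val_mul, ih, oneAddUnit, Units.inv_mk, mul_sub,
      add_mul _ _ a, hsmul, sub_smul]
    simp [add_sub_assoc]

end Ring

section IncidenceAlgebra

theorem incidenceAlgebra_sum_apply {κ α R : Type*} [LE α] [AddCommMonoid R] (s : Finset κ)
    (f : κ → IncidenceAlgebra R α) (a b : α) : (∑ k ∈ s, f k) a b = ∑ k ∈ s, f k a b :=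
  map_sum (⟨⟨fun g ↦ g a b, rfl⟩, fun _ _ ↦ rfl⟩ : IncidenceAlgebra R α →+ R) f s

variable {α R : Type*} [PartialOrder α] [LocallyFiniteOrder α] [DecidableEq α]

/-- The ring homomorphism sending an element of the incidence algebra to its diagonal. -/
def incidenceDiag (α R : Type*) [PartialOrder α] [LocallyFiniteOrder α] [DecidableEq α]
    [Semiring R] : IncidenceAlgebra R α →+* (α → R) where
  toFun f a := f a a
  map_one' := by ext; simp
  map_mul' f g := by ext; simp
  map_zero' := rfl
  map_add' _ _ := rfl

theorem pow_apply_eq_zero_of_card_Icc_le [Semiring R] {f : IncidenceAlgebra R α}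
    (hf : incidenceDiag α R f = 0) {m : ℕ} {a b : α} (hm : (Finset.Icc a b).card ≤ m) :
    (f ^ m) a b = 0 := by
  induction m generalizing a with
  | zero =>
    refine IncidenceAlgebra.apply_eq_zero_of_not_le (fun hab ↦ ?_) _
    exact (Finset.card_pos.mpr ⟨a, Finset.left_mem_Icc.mpr hab⟩).not_ge hm
  | succ m ih =>
    rw [pow_succ', IncidenceAlgebra.mul_apply]
    refine Finset.sum_eq_zero fun c hc ↦ ?_
    obtain ⟨hac, hcb⟩ := Finset.mem_Icc.mp hc
    rcases hac.eq_or_lt with rfl | hlt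
    · rw [show f a a = 0 from congrFun hf a, zero_mul]
    · have hcard := Finset.card_lt_card (Finset.Icc_ssubset_Icc_left (hac.trans hcb) hlt le_rfl)
      rw [ih (by lia), mul_zero]

theorem isNilpotent_of_incidenceDiag_eq_zero [Finite α] [Semiring R] {f : IncidenceAlgebra R α}
    (hf : incidenceDiag α R f = 0) : IsNilpotent f := by
  have := Fintype.ofFinite α
  exact ⟨Fintype.card α, IncidenceAlgebra.ext fun _ _ _ ↦
    pow_apply_eq_zero_of_card_Icc_le hf (Finset.card_le_univ _)⟩

/-- The units of the incidence algebra with every diagonal entry equal to `1`. -/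
def unipotentUnits (α R : Type*) [PartialOrder α] [LocallyFiniteOrder α] [DecidableEq α]
    [Ring R] : Subgroup (IncidenceAlgebra R α)ˣ :=
  (Units.map (incidenceDiag α R : IncidenceAlgebra R α →* (α → R))).ker

theorem mem_unipotentUnits [Ring R] {u : (IncidenceAlgebra R α)ˣ} :
    u ∈ unipotentUnits α R ↔ incidenceDiag α R u = 1 := by
  rw [unipotentUnits, MonoidHom.mem_ker, Units.ext_iff]
  rfl

theorem isNilpotent_natCast_incidenceAlgebra [Semiring R] {n : ℕ} (hn : IsNilpotent (n : R)) :
    IsNilpotent (n : IncidenceAlgebra R α) := by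
  obtain ⟨s, hs⟩ := hn
  refine ⟨s, IncidenceAlgebra.ext fun a b _ ↦ ?_⟩
  rw [← Nat.cast_pow, ← nsmul_one, IncidenceAlgebra.constSMul_apply, nsmul_eq_mul, Nat.cast_pow,
    hs, zero_mul, IncidenceAlgebra.zero_apply]

theorem isPGroup_unipotentUnits [Finite α] [Ring R] {p : ℕ} (hp : p.Prime)
    (hpR : IsNilpotent (p : R)) : IsPGroup p (unipotentUnits α R) :=
  isPGroup_ker_unitsMap hp (isNilpotent_natCast_incidenceAlgebra hpR) _
    fun _ ↦ isNilpotent_of_incidenceDiag_eq_zero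

theorem list_prod_apply_eq_zero_of_length_lt [Semiring R] (rank : α → ℕ)
    {l : List (IncidenceAlgebra R α)}
    (hl : ∀ f ∈ l, ∀ a b, rank a + 1 < rank b → f a b = 0) {a b : α}
    (hab : rank a + l.length < rank b) : l.prod a b = 0 := by
  induction l generalizing a with
  | nil =>
    rw [List.prod_nil, IncidenceAlgebra.one_apply, if_neg]
    rintro rfl
    simp at hab
  | cons f l ih =>
    rw [List.prod_cons, IncidenceAlgebra.mul_apply]
    refine Finset.sum_eq_zero fun c _ ↦ ?_
    rw [List.forall_mem_cons] at hl
    rw [List.length_cons] at hab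
    rcases lt_or_ge (rank a + 1) (rank c) with hac | hca
    · rw [hl.1 a c hac, zero_mul]
    · rw [ih hl.2 (by lia), mul_zero]

end IncidenceAlgebra

section Heap

variable {ι X : Type*} [LinearOrder ι]

/-- In the heap of a word with set of positions `ι` and commutation graph `Γ`, the piece `j` can be
dropped on top of the set of pieces `I`: the pieces of `I` that do not commute with `j` are exactly
those below it. Taking `b = j` gives `j ∉ I`. -/
def Addable (Γ : SimpleGraph ι) (I : Finset ι) (j : ι) : Prop :=
  ∀ b, ¬Γ.Adj b j → (b ∈ I ↔ b < j)

theorem Addable.notMem {Γ : SimpleGraph ι} {I : Finset ι} {j : ι} (h : Addable Γ I j) : j ∉ I := by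
  simpa using h j (Γ.loopless.irrefl j)

theorem addable_insert_iff {Γ : SimpleGraph ι} {I : Finset ι} {j l : ι} (hjl : Γ.Adj j l) :
    Addable Γ (insert j I) l ↔ Addable Γ I l := by
  refine forall₂_congr fun b hb ↦ ?_
  have hbj : b ≠ j := by rintro rfl; exact hb hjl
  rw [Finset.mem_insert, or_iff_right hbj]

theorem Addable.not_addable_insert {Γ : SimpleGraph ι} {I : Finset ι} {j l : ι}
    (hj : Addable Γ I j) (hlj : ¬Γ.Adj l j)
    (hsep : j < l → ∃ b, j < b ∧ b < l ∧ ¬Γ.Adj b j ∧ ¬Γ.Adj b l) :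
    ¬Addable Γ (insert j I) l := by
  intro hl
  rcases lt_or_ge j l with hlt | hle
  · obtain ⟨b, hjb, hbl, hbj, hbl'⟩ := hsep hlt
    have hbI : b ∈ I := Finset.mem_of_mem_insert_of_ne ((hl b hbl').mpr hbl) hjb.ne'
    exact hjb.not_gt ((hj b hbj).mp hbI)
  · rcases hle.eq_or_lt with rfl | hlt
    · exact hl.notMem (Finset.mem_insert_self _ _)
    · exact hl.notMem (Finset.mem_insert_of_mem ((hj l hlj).mpr hlt))

theorem addable_Iio [LocallyFiniteOrderBot ι] (Γ : SimpleGraph ι) (i : ι) :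
    Addable Γ (Finset.Iio i) i :=
  fun _ _ ↦ Finset.mem_Iio

theorem eq_of_addable_Iio [LocallyFiniteOrderBot ι] {Γ : SimpleGraph ι} {i j : ι}
    (hij : ¬Γ.Adj i j) (h : Addable Γ (Finset.Iio i) j) : j = i := by
  have hge : i ≤ j := by simpa using h.notMem
  have hle : j ≤ i := by simpa using h i hij
  exact hle.antisymm hge

open Classical in
/-- The operator dropping the piece `j`, as an element of the incidence algebra of the lattice of
sets of pieces. -/
noncomputable def pieceOp (R : Type*) [Semiring R] (Γ : SimpleGraph ι) (j : ι) :
    IncidenceAlgebra R (Finset ι) where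
  toFun I K := if Addable Γ I j ∧ K = insert j I then 1 else 0
  eq_zero_of_not_le' I K h := if_neg (by rintro ⟨-, rfl⟩; exact h (Finset.subset_insert j I))

variable {R : Type*} [Semiring R]

open Classical in
theorem pieceOp_apply (Γ : SimpleGraph ι) (j : ι) (I K : Finset ι) :
    pieceOp R Γ j I K = if Addable Γ I j ∧ K = insert j I then 1 else 0 :=
  rfl

open Classical in
theorem pieceOp_mul_apply (Γ : SimpleGraph ι) (j : ι) (f : IncidenceAlgebra R (Finset ι))
    (I K : Finset ι) :
    (pieceOp R Γ j * f) I K = if Addable Γ I j then f (insert j I) K else 0 := by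
  simp only [IncidenceAlgebra.mul_apply, pieceOp_apply, ite_mul, one_mul, zero_mul]
  split_ifs with h
  · simp only [h, true_and, Finset.sum_ite_eq', Finset.mem_Icc,
      Finset.subset_insert]
    split_ifs with hK
    · rfl
    · exact (IncidenceAlgebra.apply_eq_zero_of_not_le hK f).symm
  · simp [h]

theorem pieceOp_commute {Γ : SimpleGraph ι} {j l : ι} (h : Γ.Adj j l) :
    Commute (pieceOp R Γ j) (pieceOp R Γ l) := by
  classical
  refine IncidenceAlgebra.ext fun I K _ ↦ ?_
  simp only [pieceOp_mul_apply, pieceOp_apply, addable_insert_iff h, addable_insert_iff h.symm,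
    Finset.insert_comm j l]
  grind

theorem pieceOp_mul_eq_zero {Γ : SimpleGraph ι} {j l : ι} (hlj : ¬Γ.Adj l j)
    (hsep : j < l → ∃ b, j < b ∧ b < l ∧ ¬Γ.Adj b j ∧ ¬Γ.Adj b l) :
    pieceOp R Γ j * pieceOp R Γ l = 0 := by
  classical
  refine IncidenceAlgebra.ext fun I K _ ↦ ?_
  rw [pieceOp_mul_apply, pieceOp_apply, ← ite_and, if_neg, IncidenceAlgebra.zero_apply]
  rintro ⟨hj, hl, -⟩
  exact hj.not_addable_insert hlj hsep hl

variable [Fintype ι]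

open Classical in
/-- The operator of a letter `x` on the heap of the word `lab`: it drops any one of the pieces
labelled `x`. Adjacent letters of `Γ` are the ones that commute. -/
noncomputable def letterOp (R : Type*) [Semiring R] (Γ : SimpleGraph X) (lab : ι → X) (x : X) :
    IncidenceAlgebra R (Finset ι) :=
  ∑ j with lab j = x, pieceOp R (Γ.comap lab) j

theorem letterOp_commute {Γ : SimpleGraph X} (lab : ι → X) {x y : X} (h : Γ.Adj x y) :
    Commute (letterOp R Γ lab x) (letterOp R Γ lab y) := by
  refine Commute.sum_left _ _ _ fun j hj ↦ Commute.sum_right _ _ _ fun l hl ↦ pieceOp_commute ?_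
  obtain rfl : lab j = x := by simpa using hj
  obtain rfl : lab l = y := by simpa using hl
  exact h

theorem letterOp_mul_self {Γ : SimpleGraph X} {lab : ι → X}
    (hsep : ∀ j l, j < l → lab j = lab l → ∃ b, j < b ∧ b < l ∧ ¬Γ.Adj (lab b) (lab j)) (x : X) :
    letterOp R Γ lab x * letterOp R Γ lab x = 0 := by
  rw [letterOp, Finset.sum_mul_sum]
  refine Finset.sum_eq_zero fun j hj ↦ Finset.sum_eq_zero fun l hl ↦ ?_
  obtain rfl : lab j = x := by simpa using hj
  have hlab : lab l = lab j := by simpa using hl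
  refine pieceOp_mul_eq_zero (by simp [hlab]) fun hjl ↦ ?_
  obtain ⟨b, hjb, hbl, hb⟩ := hsep j l hjl hlab.symm
  exact ⟨b, hjb, hbl, hb, by rwa [SimpleGraph.comap_adj, hlab]⟩

theorem letterOp_apply_eq_zero (Γ : SimpleGraph X) (lab : ι → X) (x : X) {I K : Finset ι}
    (h : K.card ≠ I.card + 1) : letterOp R Γ lab x I K = 0 := by
  rw [letterOp, incidenceAlgebra_sum_apply]
  refine Finset.sum_eq_zero fun j _ ↦ if_neg ?_
  rintro ⟨hj, rfl⟩
  exact h (Finset.card_insert_of_notMem hj.notMem)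

theorem incidenceDiag_letterOp (Γ : SimpleGraph X) (lab : ι → X) (x : X) :
    incidenceDiag _ _ (letterOp R Γ lab x) = 0 :=
  funext fun _ ↦ letterOp_apply_eq_zero Γ lab x (by lia)

theorem letterOp_mul_apply_Iio [LocallyFiniteOrderBot ι] (Γ : SimpleGraph X) (lab : ι → X) (i : ι)
    (f : IncidenceAlgebra R (Finset ι)) (K : Finset ι) :
    (letterOp R Γ lab (lab i) * f) (Finset.Iio i) K = f (Finset.Iic i) K := by
  classical
  simp only [letterOp, Finset.sum_mul, incidenceAlgebra_sum_apply, pieceOp_mul_apply]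
  rw [Finset.sum_eq_single_of_mem i (by simp), if_pos (addable_Iio _ i), Finset.Iio_insert]
  intro j hj hji
  refine if_neg fun h ↦ hji (eq_of_addable_Iio ?_ h)
  simp [(Finset.mem_filter.mp hj).2]

end Heap

section Word

variable {X : Type*}

/-- A word in syllables `(x, n)`, standing for `x ^ n`, is reduced for the commutation graph `Γ` if
no syllable is trivial and two syllables on the same letter cannot be brought together. -/
structure IsReduced (Γ : SimpleGraph X) (L : List (X × ℤ)) : Prop where
  exponent_ne_zero : ∀ a ∈ L, a.2 ≠ 0
  exists_not_adj : ∀ A M B a b, L = A ++ a :: (M ++ b :: B) → a.1 = b.1 →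
    ∃ c ∈ M, ¬Γ.Adj c.1 a.1

theorem exists_eq_append_cons_append_cons {α : Type*} (L : List α) {i j : Fin L.length}
    (hij : i < j) : ∃ A M B, L = A ++ L.get i :: (M ++ L.get j :: B) ∧
      ∀ c ∈ M, ∃ l, i < l ∧ l < j ∧ L.get l = c := by
  have hdrop : L.drop (i + 1) = (L.drop (i + 1)).take (j - (i + 1)) ++ L.drop j := by
    conv_lhs => rw [← List.take_append_drop (j - (i + 1)) (L.drop (i + 1)), List.drop_drop,
      Nat.add_sub_cancel' hij]
  refine ⟨L.take i, (L.drop (i + 1)).take (j - (i + 1)), L.drop (j + 1), ?_, fun c hc ↦ ?_⟩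
  · simp only [List.get_eq_getElem]
    rw [← List.drop_eq_getElem_cons j.2, ← hdrop, ← List.drop_eq_getElem_cons i.2,
      List.take_append_drop]
  · obtain ⟨n, hn, rfl⟩ := List.mem_iff_getElem.mp hc
    have hnj : i + 1 + n < j := by
      rw [List.length_take] at hn
      lia
    exact ⟨⟨i + 1 + n, hnj.trans j.2⟩, by rw [Fin.lt_def]; lia, hnj, by simp⟩

theorem IsReduced.exists_between {Γ : SimpleGraph X} {L : List (X × ℤ)} (hL : IsReduced Γ L)
    {i j : Fin L.length} (hij : i < j) (hlab : (L.get i).1 = (L.get j).1) :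
    ∃ l, i < l ∧ l < j ∧ ¬Γ.Adj (L.get l).1 (L.get i).1 := by
  obtain ⟨A, M, B, hLeq, hM⟩ := exists_eq_append_cons_append_cons L hij
  obtain ⟨c, hc, hadj⟩ := hL.exists_not_adj A M B _ _ hLeq hlab
  obtain ⟨l, hil, hlj, rfl⟩ := hM c hc
  exact ⟨l, hil, hlj, hadj⟩

/-- The value in `G` of a word in syllables when the letter `x` is read as `f x`. -/
def syllableProd {G : Type*} [Group G] (f : X → G) (L : List (X × ℤ)) : G :=
  (L.map fun a ↦ f a.1 ^ a.2).prod

variable {G H : Type*} [Group G] [Group H]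

theorem map_syllableProd (φ : G →* H) (f : X → G) (L : List (X × ℤ)) :
    φ (syllableProd f L) = syllableProd (φ ∘ f) L := by
  simp [syllableProd, map_list_prod, Function.comp_def]

theorem syllableProd_append (f : X → G) (L M : List (X × ℤ)) :
    syllableProd f (L ++ M) = syllableProd f L * syllableProd f M := by
  simp [syllableProd]

theorem syllableProd_cons (f : X → G) (a : X × ℤ) (L : List (X × ℤ)) :
    syllableProd f (a :: L) = f a.1 ^ a.2 * syllableProd f L := by
  simp [syllableProd]

theorem exists_syllableProd_eq_lift (f : X → G) (w : FreeGroup X) :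
    ∃ L, syllableProd f L = FreeGroup.lift f w := by
  induction w using FreeGroup.induction_on with
  | C1 => exact ⟨[], by simp [syllableProd]⟩
  | of x => exact ⟨[(x, 1)], by simp [syllableProd]⟩
  | inv_of x _ => exact ⟨[(x, -1)], by simp [syllableProd]⟩
  | mul v w hv hw =>
    obtain ⟨L, hL⟩ := hv
    obtain ⟨M, hM⟩ := hw
    exact ⟨L ++ M, by rw [syllableProd_append, hL, hM, map_mul]⟩

theorem syllableProd_merge {f : X → G} {x : X} {M : List (X × ℤ)}
    (hM : ∀ c ∈ M, Commute (f c.1) (f x)) (A B : List (X × ℤ)) (m n : ℤ) :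
    syllableProd f (A ++ (x, m + n) :: (M ++ B)) =
      syllableProd f (A ++ (x, m) :: (M ++ (x, n) :: B)) := by
  have hcomm : Commute (f x ^ n) (syllableProd f M) := by
    refine Commute.list_prod_right _ _ ?_
    simp only [List.forall_mem_map]
    exact fun c hc ↦ ((hM c hc).zpow_zpow _ _).symm
  simp only [syllableProd_append, syllableProd_cons, zpow_add, mul_assoc, hcomm.left_comm]

theorem exists_isReduced_syllableProd_eq_lift {Γ : SimpleGraph X} {f : X → G}
    (hf : ∀ x y, Γ.Adj x y → Commute (f x) (f y)) (w : FreeGroup X) :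
    ∃ L, IsReduced Γ L ∧ syllableProd f L = FreeGroup.lift f w := by
  obtain ⟨L, hL, hmin⟩ := exists_minimalFor_of_wellFoundedLT
    (fun L ↦ syllableProd f L = FreeGroup.lift f w) List.length (exists_syllableProd_eq_lift f w)
  have hshortest {L' : List (X × ℤ)} (h : syllableProd f L' = syllableProd f L) :
      L.length ≤ L'.length :=
    (le_total _ _).elim id (hmin (h.trans hL))
  refine ⟨L, ⟨?_, ?_⟩, hL⟩
  · intro a ha ha0
    obtain ⟨A, B, rfl⟩ := List.append_of_mem ha
    have hle := hshortest (L' := A ++ B) (by simp [syllableProd, ha0])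
    simp at hle
  · rintro A M B ⟨x, m⟩ ⟨_, n⟩ rfl rfl
    by_contra! hadj
    have hle := hshortest (syllableProd_merge (fun c hc ↦ hf _ _ (hadj c hc)) A B m n)
    simp at hle

end Word

section Detection

variable {X R : Type*} [Ring R] (Γ : SimpleGraph X)

theorem one_add_smul_letterOp_apply_eq_zero {ι : Type*} [LinearOrder ι] [Fintype ι] (lab : ι → X)
    (x : X) (n : ℤ) {I K : Finset ι} (h : I.card + 1 < K.card) :
    (1 + n • letterOp R Γ lab x) I K = 0 := by
  have hIK : I ≠ K := by rintro rfl; lia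
  rw [IncidenceAlgebra.add_apply, IncidenceAlgebra.constSMul_apply,
    letterOp_apply_eq_zero Γ lab x h.ne', IncidenceAlgebra.one_apply, if_neg hIK, smul_zero,
    add_zero]

theorem list_drop_prod_letterOp_apply (L : List (X × ℤ)) {i : ℕ} (hi : i ≤ L.length) :
    ((L.drop i).map fun a ↦ 1 + a.2 • letterOp R Γ (fun j ↦ (L.get j).1) a.1).prod
      {j : Fin L.length | j < i} Finset.univ = ((L.drop i).map Prod.snd).prod := by
  set lab := fun j ↦ (L.get j).1
  induction hi using Nat.decreasingInduction with
  | self => simp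
  | of_succ i hi ih =>
    have hIio : ({j | j < i} : Finset (Fin L.length)) = Finset.Iio ⟨i, hi⟩ := by
      ext; simp [Fin.lt_def]
    have hIic : ({j | j < i + 1} : Finset (Fin L.length)) = Finset.Iic ⟨i, hi⟩ := by
      ext; simp [Fin.le_def]
    have hdegree : ((L.drop (i + 1)).map fun a ↦ 1 + a.2 • letterOp R Γ lab a.1).prod
        (Finset.Iio ⟨i, hi⟩) Finset.univ = 0 := by
      refine list_prod_apply_eq_zero_of_length_lt Finset.card ?_ ?_
      · simp only [List.forall_mem_map]
        exact fun a _ I K h ↦ one_add_smul_letterOp_apply_eq_zero Γ lab a.1 a.2 h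
      · simp only [Fin.card_Iio, List.length_map, List.length_drop, Finset.card_univ,
          Fintype.card_fin]
        lia
    have hlab : L[i].1 = lab ⟨i, hi⟩ := rfl
    rw [hIic] at ih
    rw [List.drop_eq_getElem_cons hi, List.map_cons, List.prod_cons, hIio, add_mul, one_mul,
      IncidenceAlgebra.add_apply, hdegree, zero_add, smul_mul_assoc,
      IncidenceAlgebra.constSMul_apply, hlab, letterOp_mul_apply_Iio, ih, List.map_cons,
      List.prod_cons, Int.cast_mul, zsmul_eq_mul]

theorem list_prod_letterOp_apply (L : List (X × ℤ)) :
    (L.map fun a ↦ 1 + a.2 • letterOp R Γ (fun j ↦ (L.get j).1) a.1).prod ∅ Finset.univ =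
      (L.map Prod.snd).prod := by
  simpa using list_drop_prod_letterOp_apply (R := R) Γ L (Nat.zero_le _)

variable {Γ} {L : List (X × ℤ)}

/-- The unipotent `1 + letterOp x` by which the letter `x` acts on the heap of a reduced word. -/
noncomputable def IsReduced.letterUnit (R : Type*) [Ring R] (hL : IsReduced Γ L) (x : X) :
    unipotentUnits (Finset (Fin L.length)) R :=
  ⟨oneAddUnit (letterOp R Γ (fun j ↦ (L.get j).1) x)
    (letterOp_mul_self (fun _ _ ↦ hL.exists_between) x), by
      rw [mem_unipotentUnits, oneAddUnit, map_add, map_one, incidenceDiag_letterOp, add_zero]⟩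

theorem IsReduced.letterUnit_commute (hL : IsReduced Γ L) {x y : X} (h : Γ.Adj x y) :
    Commute (hL.letterUnit R x) (hL.letterUnit R y) :=
  Subtype.ext <| Units.ext <| (Commute.one_left _).add_left <|
    (Commute.one_right _).add_right <| letterOp_commute _ h

theorem IsReduced.syllableProd_letterUnit_apply (hL : IsReduced Γ L) :
    (syllableProd (hL.letterUnit R) L).val.val ∅ Finset.univ =
      (L.map Prod.snd).prod := by
  rw [← list_prod_letterOp_apply Γ, syllableProd, ← Subgroup.subtype_apply, map_list_prod,
    ← Units.coeHom_apply, map_list_prod, List.map_map, List.map_map]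
  simp only [Function.comp_def, Subgroup.subtype_apply, Units.coeHom_apply, SubgroupClass.coe_zpow,
    letterUnit, val_oneAddUnit_zpow]

theorem IsReduced.syllableProd_letterUnit_ne_one (hL : IsReduced Γ L) (hne : L ≠ [])
    (hR : ((L.map Prod.snd).prod : R) ≠ 0) : syllableProd (hL.letterUnit R) L ≠ 1 := by
  intro hone
  have : NeZero L.length := ⟨by simpa using hne⟩
  have hempty : (∅ : Finset (Fin L.length)) ≠ Finset.univ := Finset.univ_nonempty.ne_empty.symm
  apply hR
  rw [← hL.syllableProd_letterUnit_apply, hone, OneMemClass.coe_one, Units.val_one,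
    IncidenceAlgebra.one_apply, if_neg hempty]

theorem exists_intCast_zmod_pow_ne_zero {p : ℕ} (hp : 1 < p) {z : ℤ} (hz : z ≠ 0) :
    ∃ s, (z : ZMod (p ^ s)) ≠ 0 := by
  refine ⟨z.natAbs, fun h ↦ ?_⟩
  rw [ZMod.intCast_zmod_eq_zero_iff_dvd] at h
  have hle := Nat.le_of_dvd (Int.natAbs_pos.mpr hz) (Int.natCast_dvd.mp h)
  exact (Nat.lt_pow_self hp).not_ge hle

theorem IsReduced.exists_finite_isPGroup {p : ℕ} (hp : p.Prime) (hL : IsReduced Γ L)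
    (hne : L ≠ []) : ∃ (P : Type) (_ : Group P) (t : X → P), Finite P ∧ IsPGroup p P ∧
      (∀ x y, Γ.Adj x y → Commute (t x) (t y)) ∧ syllableProd t L ≠ 1 := by
  have hexp : (L.map Prod.snd).prod ≠ 0 := by
    simpa [List.prod_eq_zero_iff] using fun x h ↦ hL.exponent_ne_zero (x, 0) h rfl
  obtain ⟨s, hs⟩ := exists_intCast_zmod_pow_ne_zero hp.one_lt hexp
  have : NeZero (p ^ s) := ⟨pow_ne_zero _ hp.ne_zero⟩
  have hpR : IsNilpotent (p : ZMod (p ^ s)) := ⟨s, by rw [← Nat.cast_pow, ZMod.natCast_self]⟩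
  have : Finite (IncidenceAlgebra (ZMod (p ^ s)) (Finset (Fin L.length))) := DFunLike.finite _
  exact ⟨_, inferInstance, hL.letterUnit (ZMod (p ^ s)), inferInstance,
    isPGroup_unipotentUnits hp hpR, fun _ _ ↦ hL.letterUnit_commute,
    hL.syllableProd_letterUnit_ne_one hne hs⟩

end Detection

section Presentation

variable {X : Type*} {S : Set (X × X)}

/-- The relators `[x, y]`, for `(x, y) ∈ S`, of the right-angled Artin group given by `S`. -/
def commutatorRels (S : Set (X × X)) : Set (FreeGroup X) :=
  (fun q ↦ ⁅FreeGroup.of q.1, FreeGroup.of q.2⁆) '' S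

/-- The defining graph of the right-angled Artin group given by `S`; passing to a simple graph
discards the trivial relators `[x, x]`. -/
def commutationGraph (S : Set (X × X)) : SimpleGraph X :=
  SimpleGraph.fromRel fun x y ↦ (x, y) ∈ S

theorem commute_of_mem {x y : X} (h : (x, y) ∈ S) :
    Commute (PresentedGroup.of (rels := commutatorRels S) x) (PresentedGroup.of y) := by
  have hone : PresentedGroup.mk (commutatorRels S) ⁅FreeGroup.of x, FreeGroup.of y⁆ = 1 :=
    PresentedGroup.one_of_mem ⟨(x, y), h, rfl⟩
  rwa [map_commutatorElement, commutatorElement_eq_one_iff_commute] at hone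

theorem commute_of_commutationGraph_adj {x y : X} (h : (commutationGraph S).Adj x y) :
    Commute (PresentedGroup.of (rels := commutatorRels S) x) (PresentedGroup.of y) :=
  h.2.elim commute_of_mem fun hyx ↦ (commute_of_mem hyx).symm

theorem lift_eq_one_of_mem_commutatorRels {H : Type*} [Group H] {t : X → H}
    (ht : ∀ x y, (commutationGraph S).Adj x y → Commute (t x) (t y)) {r : FreeGroup X}
    (hr : r ∈ commutatorRels S) : FreeGroup.lift t r = 1 := by
  obtain ⟨⟨x, y⟩, hxy, rfl⟩ := hr
  rw [map_commutatorElement, FreeGroup.lift_apply_of, FreeGroup.lift_apply_of,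
    commutatorElement_eq_one_iff_commute]
  rcases eq_or_ne x y with rfl | hne
  · exact Commute.refl _
  · exact ht x y ⟨hne, Or.inl hxy⟩

theorem exists_isReduced_syllableProd_eq (g : PresentedGroup (commutatorRels S)) :
    ∃ L, IsReduced (commutationGraph S) L ∧ syllableProd PresentedGroup.of L = g := by
  obtain ⟨w, rfl⟩ := PresentedGroup.mk_surjective _ g
  have hmk : FreeGroup.lift PresentedGroup.of = PresentedGroup.mk (commutatorRels S) :=
    FreeGroup.ext_hom _ _ fun _ ↦ FreeGroup.lift_apply_of
  rw [← hmk]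
  exact exists_isReduced_syllableProd_eq_lift (fun _ _ ↦ commute_of_commutationGraph_adj) w

end Presentation

end RightAngledArtin

open RightAngledArtin in
theorem raag_residually_p_finite_general {p : ℕ} (hp : p.Prime) {X : Type*} (S : Set (X × X)) :
    ResiduallyPFinite p (PresentedGroup (commutatorRels S)) := by
  intro g hg
  obtain ⟨L, hL, rfl⟩ := exists_isReduced_syllableProd_eq g
  have hne : L ≠ [] := by
    rintro rfl
    exact hg rfl
  obtain ⟨P, _, t, _, hP, ht, htL⟩ := hL.exists_finite_isPGroup hp hne
  have : Fact p.Prime := ⟨hp⟩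
  refine ⟨P, inferInstance,
    PresentedGroup.toGroup fun _ ↦ lift_eq_one_of_mem_commutatorRels ht,
    IsPGroup.iff_card.mp hP, ?_⟩
  simpa only [map_syllableProd, Function.comp_def, PresentedGroup.toGroup.of] using htL

/-- Every right-angled Artin group `⟨X | [x,y] = 1 for (x,y) ∈ S⟩` is residually
`p`-finite for every prime `p`. -/
theorem raag_residually_p_finite (p : ℕ) (hp : p.Prime) (X : Type*) [Finite X]
    (S : Set (X × X)) (rels : Set (FreeGroup X))
    (hrels : rels = (fun q : X × X => ⁅FreeGroup.of q.1, FreeGroup.of q.2⁆) '' S) :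
    ResiduallyPFinite p (PresentedGroup rels) := by
  subst hrels
  exact raag_residually_p_finite_general hp S
end

section
/- Let p be a prime number, let G be a residually p-finite group, and let a ∈ G. Then for every natural number n there exists a normal subgroup N of G whose index [G:N] is a power of p such that N ∩ ⟨a⟩ = ⟨a^{p^n}⟩, where ⟨a⟩ denotes the cyclic subgroup generated by a. -/
/-!
Let `x = a ^ p ^ n` survive in a finite `p`-group `P`. Among the normal subgroups of `P` avoiding
the image of `x`, choose a maximal one `K`. In `P ⧸ K` the image of `x` lies in every nontrivial
normal subgroup, in particular in a central subgroup of order `p`, so it has order `p`. Hence `a`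
has order exactly `p ^ (n + 1)` modulo the preimage `N` of `K`, and so
`N ∩ ⟨a⟩ = ⟨a ^ p ^ (n + 1)⟩`. If `x = 1`, a subgroup that works for `n` also works for `n + 1`.
-/

open Subgroup

section Group

variable {G : Type*} [Group G]

theorem inf_zpowers_eq_zpowers_pow_orderOf_mk (N : Subgroup G) [N.Normal] (a : G) :
    N ⊓ zpowers a = zpowers (a ^ orderOf (a : G ⧸ N)) := by
  have zpow_mem_iff (j : ℤ) : a ^ j ∈ N ↔ (orderOf (a : G ⧸ N) : ℤ) ∣ j := by
    rw [orderOf_dvd_iff_zpow_eq_one, ← QuotientGroup.mk_zpow, QuotientGroup.eq_one_iff]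
  apply le_antisymm
  · rintro _ ⟨hN, j, rfl⟩
    obtain ⟨i, rfl⟩ := (zpow_mem_iff j).1 hN
    exact ⟨i, by simp only [zpow_mul, zpow_natCast]⟩
  · rw [zpowers_le]
    exact ⟨mod_cast (zpow_mem_iff (orderOf (a : G ⧸ N))).2 dvd_rfl, npow_mem_zpowers a _⟩

theorem normal_of_le_center {H : Subgroup G} (hH : H ≤ center G) : H.Normal where
  conj_mem h hh g := by rwa [mem_center_iff.1 (hH hh) g, mul_inv_cancel_right]

theorem exists_maximal_normal_notMem [Finite G] {x : G} (hx : x ≠ 1) :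
    ∃ K : Subgroup G, Maximal (fun K => K.Normal ∧ x ∉ K) K :=
  (Set.toFinite {K : Subgroup G | K.Normal ∧ x ∉ K}).exists_maximal
    ⟨⊥, inferInstance, mt mem_bot.1 hx⟩

theorem mk_mem_of_maximal_normal_notMem {x : G} {K : Subgroup G} [K.Normal]
    (hK : Maximal (fun K => K.Normal ∧ x ∉ K) K) {M : Subgroup (G ⧸ K)} (hM : M.Normal)
    (hM_ne : M ≠ ⊥) : (x : G ⧸ K) ∈ M := by
  by_contra hx
  have hK_le : K ≤ M.comap (QuotientGroup.mk' K) := QuotientGroup.le_comap_mk' K M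
  have hle_K : M.comap (QuotientGroup.mk' K) ≤ K := hK.2 ⟨inferInstance, hx⟩ hK_le
  apply hM_ne
  rw [← map_comap_eq_self_of_surjective (QuotientGroup.mk'_surjective K) M,
    hle_K.antisymm hK_le, QuotientGroup.map_mk'_self]

end Group

section PGroup

variable {p : ℕ} [Fact p.Prime] {P : Type*} [Group P]

theorem exists_index_comap_eq_prime_pow (hP : IsPGroup p P) {G : Type*} [Group G] (f : G →* P)
    (K : Subgroup P) [K.FiniteIndex] : ∃ k : ℕ, (K.comap f).index = p ^ k := by
  rw [index_comap]
  exact (hP.to_subgroup f.range).index (K.subgroupOf f.range)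

variable [Finite P]

theorem exists_mem_center_orderOf_eq_prime [Nontrivial P] (hP : IsPGroup p P) :
    ∃ z ∈ center P, orderOf z = p := by
  have : Nontrivial (center P) := hP.center_nontrivial
  have hdvd : p ∣ Nat.card (center P) :=
    (hP.to_subgroup _).card_eq_or_dvd.resolve_left Finite.one_lt_card.ne'
  obtain ⟨z, hz⟩ := exists_prime_orderOf_dvd_card' p hdvd
  exact ⟨z, z.2, by rwa [orderOf_coe]⟩

theorem pow_prime_eq_one_of_forall_normal_mem (hP : IsPGroup p P) {x : P}
    (hx : ∀ M : Subgroup P, M.Normal → M ≠ ⊥ → x ∈ M) : x ^ p = 1 := by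
  nontriviality P
  obtain ⟨z, hz_center, hz_order⟩ := exists_mem_center_orderOf_eq_prime hP
  have hz_ne : zpowers z ≠ ⊥ := by
    rw [Ne, zpowers_eq_bot, ← orderOf_eq_one_iff, hz_order]
    exact (Fact.out : p.Prime).ne_one
  have hxz : x ∈ zpowers z := hx _ (normal_of_le_center (zpowers_le_of_mem hz_center)) hz_ne
  rw [← orderOf_dvd_iff_pow_eq_one, ← hz_order]
  exact orderOf_dvd_of_mem_zpowers hxz

theorem exists_normal_notMem_pow_prime_mem (hP : IsPGroup p P) {x : P} (hx : x ≠ 1) :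
    ∃ K : Subgroup P, K.Normal ∧ x ∉ K ∧ x ^ p ∈ K := by
  obtain ⟨K, hK⟩ := exists_maximal_normal_notMem hx
  obtain ⟨hK_normal, hxK⟩ := hK.1
  have hpow : (x : P ⧸ K) ^ p = 1 :=
    pow_prime_eq_one_of_forall_normal_mem (hP.to_quotient K)
      fun _ => mk_mem_of_maximal_normal_notMem hK
  exact ⟨K, hK_normal, hxK, (QuotientGroup.eq_one_iff _).1 hpow⟩

theorem exists_normal_inf_zpowers_eq_of_map_ne_one (hP : IsPGroup p P) {G : Type*} [Group G]
    (f : G →* P) {a : G} {n : ℕ} (ha : f (a ^ p ^ n) ≠ 1) :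
    ∃ N : Subgroup G, N.Normal ∧ (∃ k : ℕ, N.index = p ^ k) ∧
      N ⊓ zpowers a = zpowers (a ^ p ^ (n + 1)) := by
  obtain ⟨K, hK_normal, h_notMem, h_mem⟩ := exists_normal_notMem_pow_prime_mem hP ha
  rw [← map_pow, ← pow_mul, ← pow_succ] at h_mem
  have h_order : orderOf (a : G ⧸ K.comap f) = p ^ (n + 1) := by
    apply orderOf_eq_prime_pow <;> rwa [← QuotientGroup.mk_pow, QuotientGroup.eq_one_iff]
  refine ⟨K.comap f, inferInstance, exists_index_comap_eq_prime_pow hP f K, ?_⟩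
  rw [inf_zpowers_eq_zpowers_pow_orderOf_mk, h_order]

end PGroup

theorem exists_normal_p_power_index_inter_zpowers (p : ℕ) (hp : p.Prime)
    (G : Type*) [Group G] (hG : ResiduallyPFinite p G) (a : G) (n : ℕ) :
    ∃ N : Subgroup G, N.Normal ∧ (∃ k : ℕ, N.index = p ^ k) ∧
      N ⊓ Subgroup.zpowers a = Subgroup.zpowers (a ^ p ^ n) := by
  have : Fact p.Prime := ⟨hp⟩
  induction n with
  | zero => exact ⟨⊤, inferInstance, ⟨0, by simp⟩, by simp⟩
  | succ n ih =>
    by_cases ha : a ^ p ^ n = 1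
    · have ha_succ : a ^ p ^ (n + 1) = a ^ p ^ n := by rw [pow_succ, pow_mul, ha, one_pow]
      rwa [ha_succ]
    · obtain ⟨P, _, f, ⟨k, hk⟩, hfa⟩ := hG _ ha
      have : Finite P := Nat.finite_of_card_ne_zero (hk ▸ pow_ne_zero k hp.ne_zero)
      exact exists_normal_inf_zpowers_eq_of_map_ne_one (IsPGroup.of_card hk) f hfa
end

section
/- Let p be a prime number, let G be a finite p-group, and let a ∈ G be an element of order p^n. Then for every i with 0 ≤ i ≤ n there exists a normal subgroup K of G such that the image of a in the quotient G/K has order exactly p^i. -/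
/-!
A finite `p`-group is nilpotent, so one can argue by induction from `G / Z(G)` to `G`. Let `p ^ j`
be the order of the image of `a` in `G / Z(G)`. If `i ≤ j`, pull back a normal
subgroup of `G / Z(G)` given by the induction hypothesis. Otherwise `a ^ p ^ i` is central, so the
cyclic subgroup it generates is normal, and modulo that subgroup `a` has order exactly `p ^ i`.
-/

section

variable {G H : Type*} [Group G] [Group H]

theorem mk'_pow_eq_one_iff (K : Subgroup G) [K.Normal] (a : G) (k : ℕ) :
    QuotientGroup.mk' K a ^ k = 1 ↔ a ^ k ∈ K := by
  rw [← map_pow, QuotientGroup.mk'_apply, QuotientGroup.eq_one_iff]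

theorem orderOf_mk'_comap (f : G →* H) (L : Subgroup H) [L.Normal] (a : G) :
    orderOf (QuotientGroup.mk' (L.comap f) a) = orderOf (QuotientGroup.mk' L (f a)) := by
  rw [orderOf_eq_orderOf_iff]
  intro k
  rw [mk'_pow_eq_one_iff, mk'_pow_eq_one_iff, Subgroup.mem_comap, map_pow]

theorem pow_mem_zpowers_pow_iff {a : G} {d : ℕ} (hd : d ∣ orderOf a) (k : ℕ) :
    a ^ k ∈ Subgroup.zpowers (a ^ d) ↔ d ∣ k := by
  constructor
  · rintro ⟨c, hc : (a ^ d) ^ c = a ^ k⟩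
    rw [← zpow_natCast a d, ← zpow_mul, ← zpow_natCast a k, zpow_eq_zpow_iff_modEq] at hc
    have hmod : (d : ℤ) * c ≡ k [ZMOD d] := hc.of_dvd (Int.natCast_dvd_natCast.2 hd)
    exact Int.natCast_dvd_natCast.1 (hmod.dvd_iff.1 (dvd_mul_right _ c))
  · rintro ⟨c, rfl⟩
    rw [pow_mul]
    exact Subgroup.npow_mem_zpowers _ c

theorem orderOf_mk'_zpowers_pow {a : G} {d : ℕ} (hd : d ∣ orderOf a)
    [(Subgroup.zpowers (a ^ d)).Normal] :
    orderOf (QuotientGroup.mk' (Subgroup.zpowers (a ^ d)) a) = d := by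
  refine Nat.dvd_right_iff_eq.1 fun k ↦ ?_
  rw [orderOf_dvd_iff_pow_eq_one, mk'_pow_eq_one_iff, pow_mem_zpowers_pow_iff hd]

theorem normal_of_le_center_s8 {K : Subgroup G} (hK : K ≤ Subgroup.center G) : K.Normal where
  conj_mem x hx g := by
    rwa [Subgroup.mem_center_iff.1 (hK hx) g, mul_inv_cancel_right]

theorem exists_quotient_orderOf_eq_of_pow_mem_center {a : G} {d : ℕ} (hd : d ∣ orderOf a)
    (hcenter : a ^ d ∈ Subgroup.center G) :
    ∃ (K : Subgroup G) (_ : K.Normal), orderOf (QuotientGroup.mk' K a) = d := by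
  have hnormal : (Subgroup.zpowers (a ^ d)).Normal :=
    normal_of_le_center_s8 (Subgroup.zpowers_le.2 hcenter)
  exact ⟨_, hnormal, orderOf_mk'_zpowers_pow hd⟩

end

theorem exists_quotient_orderOf_eq_general {p : ℕ} (hp : p.Prime) {G : Type*} [Group G]
    [Group.IsNilpotent G] {a : G} {n i : ℕ} (ha : orderOf a = p ^ n) (hi : i ≤ n) :
    ∃ (K : Subgroup G) (_ : K.Normal), orderOf (QuotientGroup.mk' K a) = p ^ i := by
  refine Group.nilpotent_center_quotient_ind
    (P := fun G _ _ ↦ ∀ (a : G) (n : ℕ), orderOf a = p ^ n → i ≤ n →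
      ∃ (K : Subgroup G) (_ : K.Normal), orderOf (QuotientGroup.mk' K a) = p ^ i)
    G ?trivial ?quotient_center a n ha hi
  case trivial =>
    intro G _ _ a n ha hi
    have hcenter : a ^ p ^ i ∈ Subgroup.center G :=
      Subsingleton.elim 1 (a ^ p ^ i) ▸ one_mem _
    exact exists_quotient_orderOf_eq_of_pow_mem_center (ha ▸ pow_dvd_pow p hi) hcenter
  case quotient_center =>
    intro G _ _ ih a n ha hi
    let π := QuotientGroup.mk' (Subgroup.center G)
    obtain ⟨j, -, hj⟩ : ∃ j ≤ n, orderOf (π a) = p ^ j :=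
      (Nat.dvd_prime_pow hp).1 (ha ▸ orderOf_map_dvd π a)
    rcases le_total i j with hij | hji
    · obtain ⟨L, hL, hLa⟩ := ih (π a) j hj hij
      exact ⟨L.comap π, hL.comap π, (orderOf_mk'_comap π L a).trans hLa⟩
    · have hcenter : a ^ p ^ i ∈ Subgroup.center G := by
        rw [← mk'_pow_eq_one_iff, ← orderOf_dvd_iff_pow_eq_one, hj]
        exact pow_dvd_pow p hji
      exact exists_quotient_orderOf_eq_of_pow_mem_center (ha ▸ pow_dvd_pow p hi) hcenter

theorem exists_quotient_orderOf_eq (p : ℕ) (hp : p.Prime) (G : Type*) [Group G]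
    [Finite G] (hG : ∃ k : ℕ, Nat.card G = p ^ k) (a : G) (n : ℕ)
    (ha : orderOf a = p ^ n) :
    ∀ i : ℕ, i ≤ n → ∃ (K : Subgroup G) (_ : K.Normal),
      orderOf ((QuotientGroup.mk' K) a) = p ^ i := by
  have : Fact p.Prime := ⟨hp⟩
  have : Group.IsNilpotent G := (IsPGroup.of_card hG.choose_spec).isNilpotent
  exact fun _ hi ↦ exists_quotient_orderOf_eq_general hp ha hi
end

section
/- Let p be a prime number and let G1 and G2 be residually p-finite groups with a common cyclic subgroup A. Then G1 and G2 are each topologically p-embedded in the free product with amalgamation G1 *_A G2: for each i ∈ {1,2} and each normal subgroup N of Gi of index a power of p there exists a normal subgroup M of G1 *_A G2 of index a power of p with M ∩ Gi ≤ N. -/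
/-!
Call a normal subgroup of `p`-power index *`p`-open*. The preimages in the cyclic group `A` of
`p`-open subgroups form a chain, and going up a chief series of `G j / L` enlarges the preimage
of `L` in `A` by a factor `1` or `p` at a time. Hence, given a `p`-open `N ≤ G i`, residual
`p`-finiteness provides in every other factor a `p`-open subgroup with the same preimage in `A`
as `N`, and it remains to prove (after Higman) that any `p`-open subgroups `K i ≤ G i` with equal
preimages in `A` are cut out by one `p`-open subgroup of the pushout.

This is an induction on the indices: some of the `K i` are enlarged to `L i` with `L i / K i`
central of order `p`, keeping the preimages in `A` equal. If the `L i` are the kernels of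
compatible homomorphisms to a finite `p`-group `Q`, then `L i → L i / K i`, read in one group `C`
of order `p` in which they agree on `A`, induce compatible homomorphisms to the wreath product
`C ≀ᵣ Q` with kernels `K i`.
-/

open Monoid Subgroup

section InducedHom

variable {G Q C : Type*} [Group G] [Group Q] [Group C]

/-- `s : Q → G` lifts, along `α : G →* Q`, a map from `Q` to the image of `α` that commutes with
left translations by that image; it amounts to choosing representatives of the right cosets of
the image and preimages under `α`. -/
def IsEquivariantLift (α : G →* Q) (s : Q → G) : Prop :=
  ∀ g y, α (s (α g * y)) = α g * α (s y)

theorem exists_isEquivariantLift (α : G →* Q) : ∃ s, IsEquivariantLift α s := by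
  obtain ⟨T, hT, -⟩ := α.range.exists_isComplement_right 1
  choose s hs using fun y ↦ (hT.equiv y).1.2
  refine ⟨s, fun g y ↦ ?_⟩
  rw [hs, hs, hT.equiv_mul_left_of_mem ⟨g, rfl⟩, Subgroup.coe_mul]

namespace IsEquivariantLift

variable {α : G →* Q} {s : Q → G}

theorem inv_mul_mul_mem_ker (hs : IsEquivariantLift α s) (g : G) (y : Q) :
    (s y)⁻¹ * g * s ((α g)⁻¹ * y) ∈ α.ker := by
  rw [MonoidHom.mem_ker, map_mul, map_mul, ← map_inv α g, hs g⁻¹ y, map_inv, map_inv]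
  group

/-- The homomorphism to the wreath product induced, as in the Kaluzhnin–Krasner embedding, by a
homomorphism `χ` on the kernel of `α`. -/
def inducedHom (hs : IsEquivariantLift α s) (χ : α.ker →* C) : G →* C ≀ᵣ Q :=
  MonoidHom.mk' (fun g ↦ ⟨fun y ↦ χ ⟨_, hs.inv_mul_mul_mem_ker g y⟩, α g⟩) fun g h ↦ by
    ext y
    · simp only [RegularWreathProduct.mul_left, Pi.mul_apply, ← map_mul]
      congr 2
      simp [mul_assoc]
    · simp

theorem ker_inducedHom (hs : IsEquivariantLift α s) {χ : α.ker →* C}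
    (hχ : ∀ x y : α.ker, IsConj (x : G) y → χ x = χ y) :
    (hs.inducedHom χ).ker = χ.ker.map α.ker.subtype := by
  have left_eq (x : α.ker) (y : Q) : (hs.inducedHom χ x).left y = χ x := by
    refine (hχ _ _ (isConj_iff.2 ⟨(s y)⁻¹, ?_⟩)).symm
    simp [MonoidHom.mem_ker.1 x.2]
  ext g
  constructor
  · intro hg
    have hgα : g ∈ α.ker := congrArg RegularWreathProduct.right hg
    refine ⟨⟨g, hgα⟩, ?_, rfl⟩
    rw [SetLike.mem_coe, MonoidHom.mem_ker, ← left_eq _ 1]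
    exact congrFun (congrArg RegularWreathProduct.left hg) 1
  · rintro ⟨x, hx, rfl⟩
    exact RegularWreathProduct.ext (funext fun y ↦ (left_eq x y).trans hx) x.2

variable {A : Type*} [Group A] {φ : A →* G} {e : Q → A}

theorem mul_comp (hs : IsEquivariantLift α s) (φ : A →* G) (e : Q → A) :
    IsEquivariantLift α fun y ↦ φ (e y) * s ((α (φ (e y)))⁻¹ * y) := by
  have hα (y : Q) : α (φ (e y) * s ((α (φ (e y)))⁻¹ * y)) = α (s y) := by
    rw [map_mul, ← hs, mul_inv_cancel_left]
  intro g y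
  rw [hα, hα, hs]

/-- Since `χ` is invariant under conjugation, the value does not involve the lift `s`. -/
theorem inducedHom_mul_comp_apply (hs : IsEquivariantLift α s)
    (he : IsEquivariantLift (α.comp φ) e) {χ : α.ker →* C}
    (hχ : ∀ x y : α.ker, IsConj (x : G) y → χ x = χ y) (a : A) :
    (hs.mul_comp φ e).inducedHom χ (φ a) =
      ⟨fun y ↦ χ ⟨φ ((e y)⁻¹ * a * e ((α.comp φ a)⁻¹ * y)), he.inv_mul_mul_mem_ker a y⟩,
        α (φ a)⟩ := by
  refine RegularWreathProduct.ext (funext fun y ↦ ?_) rfl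
  refine (hχ _ _ (isConj_iff.2 ⟨(s ((α (φ (e y)))⁻¹ * y))⁻¹, ?_⟩)).symm
  have hcoset : (α (φ (e ((α (φ a))⁻¹ * y))))⁻¹ * ((α (φ a))⁻¹ * y) = (α (φ (e y)))⁻¹ * y := by
    have := he a⁻¹ y
    simp only [MonoidHom.comp_apply, map_inv] at this
    rw [this]
    group
  simp only [hcoset, MonoidHom.comp_apply, map_mul, map_inv]
  group

end IsEquivariantLift

end InducedHom

section Cyclic

variable {A : Type*} [Group A] [IsCyclic A]

theorem le_of_index_dvd_of_isCyclic {H B : Subgroup A} (h : B.index ∣ H.index) : H ≤ B := by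
  let := IsCyclic.commGroup (α := A)
  obtain ⟨a, ha⟩ := IsCyclic.exists_generator (α := A)
  have zpow_mem_iff (H : Subgroup A) (k : ℤ) : a ^ k ∈ H ↔ (H.index : ℤ) ∣ k := by
    have ha' (x : A ⧸ H) : x ∈ zpowers (a : A ⧸ H) := by
      induction x using QuotientGroup.induction_on with
      | H x => exact MonoidHom.map_zpowers (QuotientGroup.mk' H) a ▸ mem_map_of_mem _ (ha x)
    rw [← QuotientGroup.eq_one_iff, QuotientGroup.mk_zpow, ← orderOf_dvd_iff_zpow_eq_one,
      orderOf_eq_card_of_forall_mem_zpowers ha', index_eq_card]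
  intro x hx
  obtain ⟨k, rfl⟩ := ha x
  exact (zpow_mem_iff B k).2 ((Int.natCast_dvd_natCast.2 h).trans ((zpow_mem_iff H k).1 hx))

end Cyclic

section POpen

/-- `N` is a normal subgroup of `p`-power index, i.e. an open normal subgroup in the pro-`p`
topology of `G`. -/
structure IsPOpen {G : Type*} [Group G] (p : ℕ) (N : Subgroup G) : Prop where
  normal : N.Normal
  index_eq : ∃ k : ℕ, N.index = p ^ k

/-- `L / K` is a central subgroup of order `p` of `G / K`. -/
structure IsCentralCover {G : Type*} [Group G] (p : ℕ) (K L : Subgroup G) : Prop where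
  le : K ≤ L
  relIndex_eq : K.relIndex L = p
  commutator_le : ⁅L, (⊤ : Subgroup G)⁆ ≤ K

variable {p : ℕ} {G A : Type*} [Group G] [Group A]

theorem isPOpen_top : IsPOpen p (⊤ : Subgroup G) :=
  ⟨inferInstance, 0, by simp⟩

theorem IsPOpen.le_or_ge [IsCyclic A] {H B : Subgroup A} (hH : IsPOpen p H) (hB : IsPOpen p B) :
    H ≤ B ∨ B ≤ H := by
  obtain ⟨m, hm⟩ := hH.index_eq
  obtain ⟨n, hn⟩ := hB.index_eq
  refine (le_total n m).imp (fun h ↦ ?_) fun h ↦ ?_ <;>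
  · apply le_of_index_dvd_of_isCyclic
    rw [hm, hn]
    exact pow_dvd_pow p h

namespace IsCentralCover

variable {K L : Subgroup G}

theorem normal (h : IsCentralCover p K L) : K.Normal :=
  commutator_top_right_le_iff.1 ((commutator_mono h.le le_rfl).trans h.commutator_le)

theorem normal_cover (h : IsCentralCover p K L) : L.Normal :=
  commutator_top_right_le_iff.1 (h.commutator_le.trans h.le)

theorem relIndex_comap_dvd (h : IsCentralCover p K L) (f : A →* G) :
    (K.comap f).relIndex (L.comap f) ∣ p := by
  have := h.normal
  rw [relIndex_comap, ← relIndex_subgroupOf (map_comap_le f L)]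
  exact (relIndex_dvd_index_of_normal _ _).trans h.relIndex_eq.dvd

theorem apply_eq_of_isConj (h : IsCentralCover p K L) {C : Type*} [Group C] {χ : L →* C}
    (hχ : χ.ker = K.subgroupOf L) (x y : L) (hxy : IsConj (x : G) y) : χ x = χ y := by
  obtain ⟨c, hc⟩ := isConj_iff.1 hxy
  rw [eq_comm, ← div_eq_one, ← map_div, ← MonoidHom.mem_ker, hχ, mem_subgroupOf, coe_div, ← hc,
    div_eq_mul_inv, ← commutatorElement_def]
  exact h.commutator_le (commutator_comm L ⊤ ▸ commutator_mem_commutator (mem_top c) x.2)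

theorem lt [hp : Fact p.Prime] (h : IsCentralCover p K L) : K < L :=
  lt_of_le_not_ge h.le fun hLK ↦ hp.out.ne_one (h.relIndex_eq ▸ relIndex_eq_one.2 hLK)

end IsCentralCover

variable [hp : Fact p.Prime]

namespace IsPOpen

theorem of_index_dvd {N : Subgroup G} (hN : N.Normal) {k : ℕ} (h : N.index ∣ p ^ k) :
    IsPOpen p N :=
  have ⟨m, _, hm⟩ := (Nat.dvd_prime_pow hp.out).1 h
  ⟨hN, m, hm⟩

theorem of_ker {P : Type*} [Group P] (hP : ∃ k : ℕ, Nat.card P = p ^ k) (f : G →* P) :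
    IsPOpen p f.ker := by
  obtain ⟨k, hk⟩ := hP
  refine of_index_dvd inferInstance (k := k) ?_
  rw [index_ker, ← hk]
  exact card_subgroup_dvd_card f.range

theorem comap {N : Subgroup G} (hN : IsPOpen p N) (f : A →* G) : IsPOpen p (N.comap f) := by
  obtain ⟨hN, k, hk⟩ := hN
  refine of_index_dvd inferInstance (k := k) ?_
  rw [index_comap, ← hk]
  exact relIndex_dvd_index_of_normal N f.range

theorem finiteIndex {N : Subgroup G} (hN : IsPOpen p N) : N.FiniteIndex :=
  have ⟨k, hk⟩ := hN.index_eq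
  ⟨hk ▸ pow_ne_zero k hp.out.ne_zero⟩

theorem of_isCentralCover {K L : Subgroup G} (hK : IsPOpen p K) (h : IsCentralCover p K L) :
    IsPOpen p L :=
  have ⟨_, hk⟩ := hK.index_eq
  of_index_dvd h.normal_cover (hk ▸ index_dvd_of_le h.le)

end IsPOpen

theorem exists_mem_center_orderOf_eq [Finite G] [Nontrivial G] (hG : IsPGroup p G) :
    ∃ z ∈ center G, orderOf z = p := by
  have := hG.center_nontrivial
  obtain ⟨n, hn, hcard⟩ := (hG.to_subgroup (center G)).nontrivial_iff_card.1 this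
  obtain ⟨z, hz⟩ := exists_prime_orderOf_dvd_card' (G := center G) p
    (hcard ▸ dvd_pow_self p hn.ne')
  exact ⟨z, z.2, by rwa [orderOf_coe]⟩

theorem IsPOpen.exists_isCentralCover {K : Subgroup G} (hK : IsPOpen p K) (htop : K ≠ ⊤) :
    ∃ L, IsCentralCover p K L := by
  have := hK.normal
  have := hK.finiteIndex
  have : Nontrivial (G ⧸ K) := QuotientGroup.nontrivial_iff.2 htop
  obtain ⟨k, hk⟩ := hK.index_eq
  obtain ⟨z, hzc, hz⟩ := exists_mem_center_orderOf_eq (IsPGroup.of_card (G := G ⧸ K) hk)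
  have hmk := QuotientGroup.mk'_surjective K
  refine ⟨(zpowers z).comap (QuotientGroup.mk' K), ?_, ?_, ?_⟩
  · exact (QuotientGroup.ker_mk' K).ge.trans (ker_le_comap _ _)
  · rw [← congrArg (relIndex · _) (QuotientGroup.ker_mk' K), relIndex_ker,
      map_comap_eq_self_of_surjective hmk, Nat.card_zpowers, hz]
  · refine commutator_le.2 fun x hx y _ ↦ ?_
    rw [← QuotientGroup.eq_one_iff, ← QuotientGroup.mk'_apply, map_commutatorElement,
      commutatorElement_eq_one_iff_mul_comm]
    exact (mem_center_iff.1 (zpowers_le.2 hzc hx) _).symm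

section Cyclic

variable [IsCyclic A]

theorem IsPOpen.le_of_lt_of_relIndex_dvd {H B B' : Subgroup A} (hB : IsPOpen p B)
    (hB' : IsPOpen p B') (hlt : H < B) (hrel : H.relIndex B' ∣ p) : B' ≤ B := by
  refine (hB'.le_or_ge hB).elim id fun hBB' ↦ ?_
  have hprime : (H.relIndex B * B.relIndex B').Prime := by
    rw [relIndex_mul_relIndex H B B' hlt.le hBB',
      ((Nat.dvd_prime hp.out).1 hrel).resolve_left fun h ↦
        (hlt.trans_le hBB').not_ge (relIndex_eq_one.1 h)]
    exact hp.out
  obtain ⟨-, h⟩ | ⟨-, h⟩ := Nat.prime_mul_iff.1 hprime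
  · exact relIndex_eq_one.1 h
  · exact absurd (relIndex_eq_one.1 h) hlt.not_ge

variable {f : A →* G} {B : Subgroup A}

theorem IsPOpen.exists_comap_eq {L : Subgroup G} (hL : IsPOpen p L) (hB : IsPOpen p B)
    (hLB : L.comap f ≤ B) : ∃ L', IsPOpen p L' ∧ L'.comap f = B := by
  induction hn : L.index using Nat.strong_induction_on generalizing L with
  | _ n ih =>
    obtain heq | hlt := hLB.eq_or_lt
    · exact ⟨L, hL, heq⟩
    have htop : L ≠ ⊤ := by
      rintro rfl
      exact not_top_lt hlt
    obtain ⟨L', hLL'⟩ := hL.exists_isCentralCover htop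
    have hL' := hL.of_isCentralCover hLL'
    have := hL.finiteIndex
    exact ih _ (hn ▸ index_strictAnti hLL'.lt) hL'
      (hB.le_of_lt_of_relIndex_dvd (hL'.comap f) hlt (hLL'.relIndex_comap_dvd f)) rfl

theorem ResiduallyPFinite.exists_comap_le (hG : ResiduallyPFinite p G)
    (hf : Function.Injective f) (hB : IsPOpen p B) : ∃ L, IsPOpen p L ∧ L.comap f ≤ B := by
  by_cases htop : B = ⊤
  · exact ⟨⊤, isPOpen_top, htop ▸ le_top⟩
  obtain ⟨B', hBB'⟩ := hB.exists_isCentralCover htop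
  have hB' := hB.of_isCentralCover hBB'
  obtain ⟨b, hbB', hbB⟩ := SetLike.exists_of_lt hBB'.lt
  have hfb : f b ≠ 1 := fun h ↦ hbB ((map_eq_one_iff f hf).1 h ▸ B.one_mem)
  obtain ⟨P, _, g, hP, hg⟩ := hG (f b) hfb
  have hker := IsPOpen.of_ker hP g
  refine ⟨g.ker, hker, ((hker.comap f).le_or_ge hB).elim id fun hle ↦ ?_⟩
  obtain heq | hlt := hle.eq_or_lt
  · exact heq.ge
  · exact absurd ((hker.comap f).le_of_lt_of_relIndex_dvd hB' hlt hBB'.relIndex_eq.dvd hbB') hg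

theorem ResiduallyPFinite.exists_comap_eq (hG : ResiduallyPFinite p G)
    (hf : Function.Injective f) (hB : IsPOpen p B) : ∃ L, IsPOpen p L ∧ L.comap f = B :=
  have ⟨_, hL, hLB⟩ := hG.exists_comap_le hf hB
  hL.exists_comap_eq hB hLB

end Cyclic

end POpen

section Pushout

variable {p : ℕ} {ι A : Type*} {G : ι → Type*} [Group A] [∀ i, Group (G i)]

/-- The subgroups `K i` of the factors are the traces of a single normal subgroup of `p`-power
index of the pushout. -/
def ExtendsToPushout (p : ℕ) (φ : ∀ i, A →* G i) (K : ∀ i, Subgroup (G i)) : Prop :=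
  ∃ M : Subgroup (PushoutI φ), IsPOpen p M ∧ ∀ i, M.comap (PushoutI.of i) = K i

variable {φ : ∀ i, A →* G i} {K L : ∀ i, Subgroup (G i)}

theorem extendsToPushout_top : ExtendsToPushout p φ fun _ ↦ ⊤ :=
  ⟨⊤, isPOpen_top, fun _ ↦ comap_top _⟩

theorem exists_pushoutHom_ker_eq [Nonempty ι] {Q C : Type*} [Group Q] [Group C]
    (γ : PushoutI φ →* Q) (χ : ∀ i, (γ.comp (PushoutI.of i)).ker →* C)
    (hconj : ∀ i (x y : (γ.comp (PushoutI.of i)).ker), IsConj (x : G i) y → χ i x = χ i y)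
    (hagree : ∀ i j a hi hj, χ i ⟨φ i a, hi⟩ = χ j ⟨φ j a, hj⟩) :
    ∃ β : PushoutI φ →* C ≀ᵣ Q, ∀ i,
      (β.comp (PushoutI.of i)).ker = (χ i).ker.map (Subgroup.subtype _) := by
  obtain ⟨e, he⟩ := exists_isEquivariantLift (γ.comp (PushoutI.base φ))
  choose s hs using fun i ↦ exists_isEquivariantLift (γ.comp (PushoutI.of (φ := φ) i))
  have hbase (i) : (γ.comp (PushoutI.of i)).comp (φ i) = γ.comp (PushoutI.base φ) := by
    rw [MonoidHom.comp_assoc, PushoutI.of_comp_eq_base]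
  have he' (i) : IsEquivariantLift ((γ.comp (PushoutI.of i)).comp (φ i)) e := hbase i ▸ he
  let W (i) := ((hs i).mul_comp (φ i) e).inducedHom (χ i)
  have hW (i j) : (W i).comp (φ i) = (W j).comp (φ j) := by
    ext1 a
    refine ((hs i).inducedHom_mul_comp_apply (he' i) (hconj i) a).trans
      (.trans ?_ ((hs j).inducedHom_mul_comp_apply (he' j) (hconj j) a).symm)
    ext y
    · simp only [hbase]
      exact hagree i j _ _ _
    · exact (DFunLike.congr_fun (hbase i) a).trans (DFunLike.congr_fun (hbase j) a).symm
  let i₀ : ι := Classical.arbitrary ι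
  refine ⟨PushoutI.lift W ((W i₀).comp (φ i₀)) fun i ↦ hW i i₀, fun i ↦ ?_⟩
  have hcomp : (PushoutI.lift W _ fun i ↦ hW i i₀).comp (PushoutI.of i) = W i := by
    ext1 g
    rw [MonoidHom.comp_apply, PushoutI.lift_of]
  rw [hcomp]
  exact ((hs i).mul_comp (φ i) e).ker_inducedHom (hconj i)

theorem exists_monoidHom_quotient_of_prime_index {X Y : Type*} [Group X] [Group Y] {σ : X →* Y}
    {R : Subgroup X} {T : Subgroup Y} [R.Normal] [T.Normal] (hR : T.comap σ = R)
    (htop : R ≠ ⊤) (hT : T.index.Prime) :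
    ∃ χ : Y →* X ⧸ R, χ.ker = T ∧ ∀ x, χ (σ x) = x := by
  have : Fact (Nat.card (Y ⧸ T)).Prime := ⟨hT⟩
  let τ : X →* Y ⧸ T := (QuotientGroup.mk' T).comp σ
  have hker : τ.ker = R := by
    rw [← MonoidHom.comap_ker, QuotientGroup.ker_mk', hR]
  have hrange : τ.range = ⊤ := by
    refine (τ.range.eq_bot_or_eq_top_of_prime_card).resolve_left fun h ↦ htop ?_
    rw [← hker, MonoidHom.range_eq_bot_iff.1 h, MonoidHom.ker_one]
  let ε : X ⧸ R ≃* Y ⧸ T := (QuotientGroup.quotientMulEquivOfEq hker.symm).trans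
    (QuotientGroup.quotientKerEquivOfSurjective τ (MonoidHom.range_eq_top.1 hrange))
  refine ⟨(ε.symm : Y ⧸ T →* X ⧸ R).comp (QuotientGroup.mk' T), ?_, fun x ↦ ?_⟩
  · rw [MonoidHom.ker_mulEquiv_comp, QuotientGroup.ker_mk']
  · exact ε.symm_apply_apply x

variable [hp : Fact p.Prime]

theorem exists_card_wreathProduct_eq_prime_pow {C Q : Type*} [Group C] [Group Q]
    (hC : ∃ k : ℕ, Nat.card C = p ^ k) (hQ : ∃ k : ℕ, Nat.card Q = p ^ k) :
    ∃ k : ℕ, Nat.card (C ≀ᵣ Q) = p ^ k := by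
  obtain ⟨m, hm⟩ := hC
  obtain ⟨n, hn⟩ := hQ
  have : Finite Q := Nat.finite_of_card_ne_zero (hn ▸ pow_ne_zero n hp.out.ne_zero)
  rw [RegularWreathProduct.card, hm, hn, ← pow_mul, ← pow_add]
  exact ⟨_, rfl⟩

namespace ExtendsToPushout

theorem of_characters (hL : ExtendsToPushout p φ L) {C : Type*} [Group C]
    (hC : ∃ k : ℕ, Nat.card C = p ^ k) (hKL : ∀ i, K i ≤ L i) (χ : ∀ i, L i →* C)
    (hker : ∀ i, (χ i).ker = (K i).subgroupOf (L i))
    (hconj : ∀ i (x y : L i), IsConj (x : G i) y → χ i x = χ i y)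
    (hagree : ∀ i j a hi hj, χ i ⟨φ i a, hi⟩ = χ j ⟨φ j a, hj⟩) :
    ExtendsToPushout p φ K := by
  obtain _ | _ := isEmpty_or_nonempty ι
  · exact ⟨⊤, isPOpen_top, isEmptyElim⟩
  obtain ⟨M, ⟨_, hM⟩, hML⟩ := hL
  obtain rfl : L = fun i ↦ ((QuotientGroup.mk' M).comp (PushoutI.of i)).ker := by
    ext1 i
    rw [← hML, ← MonoidHom.comap_ker, QuotientGroup.ker_mk']
  obtain ⟨β, hβ⟩ := exists_pushoutHom_ker_eq (QuotientGroup.mk' M) χ hconj hagree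
  refine ⟨β.ker, .of_ker (exists_card_wreathProduct_eq_prime_pow hC hM) β, fun i ↦ ?_⟩
  rw [MonoidHom.comap_ker, hβ, hker, subgroupOf_map_subtype, inf_eq_left.2 (hKL i)]

theorem of_update [DecidableEq ι] {i : ι} {N : Subgroup (G i)}
    (h : ExtendsToPushout p φ (Function.update K i N)) (hN : IsCentralCover p (K i) N)
    (hcomap : N.comap (φ i) = (K i).comap (φ i)) : ExtendsToPushout p φ K := by
  have := hN.normal
  have hchar (j) : ∃ χ : Function.update K i N j →* N ⧸ (K i).subgroupOf N,
      K j ≤ Function.update K i N j ∧ χ.ker = (K j).subgroupOf (Function.update K i N j) ∧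
      (∀ x y : Function.update K i N j, IsConj (x : G j) y → χ x = χ y) ∧
      ∀ a ha, χ ⟨φ j a, ha⟩ = 1 := by
    obtain rfl | hj := eq_or_ne j i
    · rw [Function.update_self]
      have hker := QuotientGroup.ker_mk' ((K j).subgroupOf N)
      refine ⟨QuotientGroup.mk' _, hN.le, hker, hN.apply_eq_of_isConj hker, fun a ha ↦ ?_⟩
      exact (QuotientGroup.eq_one_iff _).2 (hcomap.le ha)
    · rw [Function.update_of_ne hj]
      exact ⟨1, le_rfl, by rw [MonoidHom.ker_one, subgroupOf_self], fun _ _ _ ↦ rfl,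
        fun _ _ ↦ rfl⟩
  choose χ hle hker hconj hone using hchar
  exact h.of_characters ⟨1, hN.relIndex_eq.trans (pow_one p).symm⟩ hle χ hker hconj
    fun i j a hi hj ↦ (hone i a hi).trans (hone j a hj).symm

theorem of_forall_isCentralCover (hL : ExtendsToPushout p φ L)
    (hKL : ∀ i, IsCentralCover p (K i) (L i)) {B B' : Subgroup A} [B.Normal]
    (hB : ∀ i, (K i).comap (φ i) = B) (hB' : ∀ i, (L i).comap (φ i) = B')
    (hBB' : B.relIndex B' = p) : ExtendsToPushout p φ K := by
  let σ (i) : B' →* L i :=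
    ((φ i).comp B'.subtype).codRestrict (L i) fun b ↦ (hB' i).ge b.2
  have hσ (i) : ((K i).subgroupOf (L i)).comap (σ i) = B.subgroupOf B' := by
    rw [← hB i]
    rfl
  have htop : B.subgroupOf B' ≠ ⊤ := by
    rw [Ne, ← index_eq_one, ← relIndex, hBB']
    exact hp.out.ne_one
  have hchar (i) : ∃ χ : L i →* B' ⧸ B.subgroupOf B',
      χ.ker = (K i).subgroupOf (L i) ∧ ∀ b, χ (σ i b) = b :=
    have := (hKL i).normal
    exists_monoidHom_quotient_of_prime_index (hσ i) htop
      ((hKL i).relIndex_eq.symm ▸ hp.out :)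
  choose χ hker hχ using hchar
  refine hL.of_characters ⟨1, hBB'.trans (pow_one p).symm⟩ (fun i ↦ (hKL i).le) χ hker
    (fun i ↦ (hKL i).apply_eq_of_isConj (hker i)) fun i j a hi hj ↦ ?_
  have ha : a ∈ B' := hB' i ▸ hi
  exact (hχ i ⟨a, ha⟩).trans (hχ j ⟨a, ha⟩).symm

end ExtendsToPushout

theorem sum_index_lt_sum_index [Fintype ι] (hK : ∀ i, IsPOpen p (K i)) (hKL : K < L) :
    ∑ i, (L i).index < ∑ i, (K i).index := by
  have hfin (i) : (K i).FiniteIndex := (hK i).finiteIndex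
  obtain ⟨hle, i, hlt⟩ := Pi.lt_def.1 hKL
  exact Finset.sum_lt_sum (fun j _ ↦ index_antitone (hle j))
    ⟨i, Finset.mem_univ i, index_strictAnti hlt⟩

theorem exists_isCentralCover_family [IsCyclic A] {B : Subgroup A} (hK : ∀ i, IsPOpen p (K i))
    (hB : ∀ i, (K i).comap (φ i) = B)
    (hgrow : ∀ i N, IsCentralCover p (K i) N → N.comap (φ i) ≠ B) {i₀ : ι} (hi₀ : K i₀ ≠ ⊤) :
    ∃ (L : ∀ i, Subgroup (G i)) (B' : Subgroup A), (∀ i, IsCentralCover p (K i) (L i)) ∧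
      (∀ i, (L i).comap (φ i) = B') ∧ B.relIndex B' = p := by
  have lt_comap {i N} (h : IsCentralCover p (K i) N) : B < N.comap (φ i) :=
    lt_of_le_of_ne (hB i ▸ comap_mono h.le) (hgrow i N h).symm
  have relIndex_dvd {i N} (h : IsCentralCover p (K i) N) : B.relIndex (N.comap (φ i)) ∣ p :=
    hB i ▸ h.relIndex_comap_dvd (φ i)
  obtain ⟨N, hN⟩ := (hK i₀).exists_isCentralCover hi₀
  have hne (i) : K i ≠ ⊤ := fun htop ↦ by
    have hBtop : B = ⊤ := by rw [← hB i, htop, comap_top]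
    exact not_top_lt (hBtop ▸ lt_comap hN)
  choose L hL using fun i ↦ (hK i).exists_isCentralCover (hne i)
  have hLA (i) : IsPOpen p ((L i).comap (φ i)) := ((hK i).of_isCentralCover (hL i)).comap _
  have hle (i j) : (L i).comap (φ i) ≤ (L j).comap (φ j) :=
    (hLA j).le_of_lt_of_relIndex_dvd (hLA i) (lt_comap (hL j)) (relIndex_dvd (hL i))
  refine ⟨L, (L i₀).comap (φ i₀), hL, fun i ↦ (hle i i₀).antisymm (hle i₀ i), ?_⟩
  exact ((Nat.dvd_prime hp.out).1 (relIndex_dvd (hL i₀))).resolve_left fun h ↦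
    (lt_comap (hL i₀)).not_ge (relIndex_eq_one.1 h)

theorem extendsToPushout_of_comap_eq [Finite ι] [IsCyclic A] {B : Subgroup A}
    (hK : ∀ i, IsPOpen p (K i)) (hB : ∀ i, (K i).comap (φ i) = B) : ExtendsToPushout p φ K := by
  classical
  have := Fintype.ofFinite ι
  induction hn : ∑ i, (K i).index using Nat.strong_induction_on generalizing K B with
  | _ n ih =>
    subst hn
    by_cases hgrow : ∃ i N, IsCentralCover p (K i) N ∧ N.comap (φ i) = B
    · obtain ⟨i, N, hKN, hN⟩ := hgrow
      have hlt : K < Function.update K i N := lt_update_self_iff.2 hKN.lt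
      have hcomap := hN.trans (hB i).symm
      refine .of_update (ih (B := B) _ (sum_index_lt_sum_index hK hlt) ?_ ?_ rfl) hKN hcomap
      · exact (Function.forall_update_iff K fun _ K ↦ IsPOpen p K).2
          ⟨(hK i).of_isCentralCover hKN, fun j _ ↦ hK j⟩
      · exact (Function.forall_update_iff K fun j K ↦ K.comap (φ j) = B).2 ⟨hN, fun j _ ↦ hB j⟩
    push Not at hgrow
    by_cases htop : ∀ i, K i = ⊤
    · exact funext htop ▸ extendsToPushout_top
    obtain ⟨i₀, hi₀⟩ := not_forall.1 htop
    obtain ⟨L, B', hKL, hL, hBB'⟩ := exists_isCentralCover_family hK hB hgrow hi₀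
    have hlt : K < L := Pi.lt_def.2 ⟨fun i ↦ (hKL i).le, i₀, (hKL i₀).lt⟩
    have hLp (i) : IsPOpen p (L i) := (hK i).of_isCentralCover (hKL i)
    have : B.Normal := hB i₀ ▸ ((hK i₀).comap (φ i₀)).normal
    exact (ih _ (sum_index_lt_sum_index hK hlt) hLp hL rfl).of_forall_isCentralCover hKL hB hL hBB'

end Pushout

theorem factors_top_p_embedded_cyclic_amalgam_general {p : ℕ} (hp : p.Prime)
    {ι A : Type*} [Finite ι] [Group A] [IsCyclic A] {G : ι → Type*} [∀ i, Group (G i)]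
    (φ : ∀ i, A →* G i) (i : ι) (hinj : ∀ j ≠ i, Function.Injective (φ j))
    (hres : ∀ j ≠ i, ResiduallyPFinite p (G j)) {N : Subgroup (G i)} (hN : IsPOpen p N) :
    ∃ M : Subgroup (PushoutI φ), IsPOpen p M ∧ M.comap (PushoutI.of i) = N := by
  classical
  have := Fact.mk hp
  choose! L hL hLN using fun j hj ↦ (hres j hj).exists_comap_eq (hinj j hj) (hN.comap (φ i))
  obtain ⟨M, hM, hMK⟩ := extendsToPushout_of_comap_eq (K := Function.update L i N)
    ((Function.forall_update_iff L fun _ K ↦ IsPOpen p K).2 ⟨hN, hL⟩)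
    ((Function.forall_update_iff L fun j K ↦ K.comap (φ j) = N.comap (φ i)).2 ⟨rfl, hLN⟩)
  exact ⟨M, hM, (hMK i).trans (Function.update_self i N L)⟩

/-- If `G true` and `G false` are residually `p`-finite groups with a common cyclic
subgroup `A`, then each factor is topologically `p`-embedded in the amalgamated free
product (the pushout of the two injections of `A`). -/
theorem factors_top_p_embedded_cyclic_amalgam (p : ℕ) (hp : p.Prime)
    (A : Type*) [Group A] [IsCyclic A] (G : Bool → Type*) [∀ i, Group (G i)]
    (φ : ∀ i, A →* G i) (hinj : ∀ i, Function.Injective (φ i))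
    (hres : ∀ i, ResiduallyPFinite p (G i)) :
    ∀ i, ∀ N : Subgroup (G i), N.Normal → (∃ k : ℕ, N.index = p ^ k) →
      ∃ M : Subgroup (Monoid.PushoutI φ), M.Normal ∧ (∃ k : ℕ, M.index = p ^ k) ∧
        M.comap (Monoid.PushoutI.of (φ := φ) i) ≤ N := by
  intro i N hN hNp
  obtain ⟨M, hM, hMN⟩ := factors_top_p_embedded_cyclic_amalgam_general hp φ i
    (fun j _ ↦ hinj j) (fun j _ ↦ hres j) ⟨hN, hNp⟩
  exact ⟨M, hM.normal, hM.index_eq, hMN.le⟩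
end

section
/- Let p be a prime number and let G1 and G2 be groups with a shared finitely generated central subgroup A (so A is a finitely generated abelian group contained in the center of each Gi). Assume A is topologically p-embedded in G1 and in G2. Then for each pair {N1, N2} with Ni a normal subgroup of Gi of index a power of p (i = 1, 2), there exists a pair {P1, P2} such that Pi is a normal subgroup of Gi of index a power of p, Pi ≤ Ni, and P1 ∩ A = P2 ∩ A; consequently G1 and G2 are each topologically p-embedded in the free product with amalgamation G1 *_A G2. -/
/-!
A family of `p`-power index normal subgroups `P i` of `G i` meeting `A` in the same subgroup `B`
gives a `p`-power index normal subgroup of the amalgam. The relations identifying the copies of `A`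
in `Π i, G i` are the tuples `(φ i (a i))` with `∏ i, a i = 1`, and they are central. Modulo these
and `Π i, P i` the product is a quotient of the amalgam. If `g : G i` dies in it, then
`g ∈ P i * φ i (a i)` with `a j ∈ B` for `j ≠ i`; since `∏ j, a j = 1`, also `a i ∈ B`, so
`g ∈ P i`.

To make a family `N i` compatible, put `B := ⨅ i, N i ∩ A`. As `A` is topologically `p`-embedded,
some `p`-power index normal `M i` has `M i ∩ A ≤ B`, and `P i := (M i ∩ N i) B` is normal because
`B` is central; it lies in `N i` and meets `A` exactly in `B`.
-/

/-- The subgroup `H` has index a power of `p`; with normality, these are the basic neighbourhoods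
of `1` in the pro-`p` topology of the group. -/
def HasPPowIndex (p : ℕ) {G : Type*} [Group G] (H : Subgroup G) : Prop :=
  ∃ k : ℕ, H.index = p ^ k

namespace HasPPowIndex

variable {p : ℕ} {G G' : Type*} [Group G] [Group G'] {H K : Subgroup G}

theorem top (p : ℕ) : HasPPowIndex p (⊤ : Subgroup G) :=
  ⟨0, by simp⟩

theorem of_index_dvd (hp : p.Prime) {H' : Subgroup G'} (hH : HasPPowIndex p H)
    (hdvd : H'.index ∣ H.index) : HasPPowIndex p H' := by
  obtain ⟨k, hk⟩ := hH
  obtain ⟨l, -, hl⟩ := (Nat.dvd_prime_pow hp).1 (hk ▸ hdvd)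
  exact ⟨l, hl⟩

theorem mono (hp : p.Prime) (hH : HasPPowIndex p H) (hHK : H ≤ K) : HasPPowIndex p K :=
  hH.of_index_dvd hp (Subgroup.index_dvd_of_le hHK)

theorem comap [H.Normal] (hp : p.Prime) (hH : HasPPowIndex p H) (f : G' →* G) :
    HasPPowIndex p (H.comap f) :=
  hH.of_index_dvd hp (Subgroup.index_comap H f ▸ Subgroup.relIndex_dvd_index_of_normal H f.range)

theorem inf [H.Normal] (hp : p.Prime) (hH : HasPPowIndex p H) (hK : HasPPowIndex p K) :
    HasPPowIndex p (H ⊓ K) := by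
  obtain ⟨k, hk⟩ := hH.comap hp K.subtype
  obtain ⟨l, hl⟩ := hK
  refine ⟨k + l, ?_⟩
  calc (H ⊓ K).index = H.relIndex K * K.index := by
        rw [← Subgroup.inf_relIndex_right, Subgroup.relIndex_mul_index inf_le_right]
    _ = p ^ (k + l) := by rw [pow_add, ← hk, ← hl, Subgroup.relIndex, Subgroup.subgroupOf]

theorem iInf {ι : Type*} [Finite ι] {N : ι → Subgroup G} [∀ i, (N i).Normal] (hp : p.Prime)
    (hN : ∀ i, HasPPowIndex p (N i)) : HasPPowIndex p (⨅ i, N i) := by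
  classical
  cases nonempty_fintype ι
  suffices ∀ s : Finset ι, HasPPowIndex p (⨅ i ∈ s, N i) by simpa using this Finset.univ
  intro s
  induction s using Finset.induction_on with
  | empty => simpa using top p
  | insert i s _ ih => simpa only [Finset.iInf_insert] using (hN i).inf hp ih

end HasPPowIndex

theorem normal_map_of_forall_mem_center {A G : Type*} [Group A] [Group G] {f : A →* G}
    (hf : ∀ a, f a ∈ Subgroup.center G) (B : Subgroup A) : (B.map f).Normal where
  conj_mem := by
    rintro _ ⟨b, hb, rfl⟩ g
    rw [Subgroup.mem_center_iff.1 (hf b) g, mul_inv_cancel_right]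
    exact ⟨b, hb, rfl⟩

theorem comap_sup_map_eq_of_comap_le {A G : Type*} [Group A] [Group G] {f : A →* G}
    {B : Subgroup A} {N : Subgroup G} [N.Normal] (hNB : N.comap f ≤ B) :
    (N ⊔ B.map f).comap f = B := by
  refine le_antisymm (fun a ha ↦ ?_) (Subgroup.map_le_iff_le_comap.1 le_sup_right)
  obtain ⟨n, hn, _, ⟨b, hb, rfl⟩, hnb⟩ := Subgroup.mem_sup_of_normal_left.1 ha
  have hab : a * b⁻¹ ∈ B := hNB <| by
    rwa [Subgroup.mem_comap, map_mul, map_inv, ← hnb, mul_inv_cancel_right]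
  simpa using B.mul_mem hab hb

namespace TopPEmbedded

variable {p : ℕ} {A G : Type*} [Group A] [Group G] {f : A →* G} {B : Subgroup A}

theorem exists_normal_comap_le [B.Normal] (hp : p.Prime) (hf : TopPEmbedded p f.range)
    (hB : HasPPowIndex p B) (hker : f.ker ≤ B) :
    ∃ M : Subgroup G, M.Normal ∧ HasPPowIndex p M ∧ M.comap f ≤ B := by
  have hsurj := f.rangeRestrict_surjective
  obtain ⟨M, hMnormal, hM, hMB⟩ := hf (B.map f.rangeRestrict) (.map ‹_› _ hsurj)
    (hB.of_index_dvd hp (Subgroup.index_map_dvd B hsurj))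
  refine ⟨M, hMnormal, hM, ?_⟩
  calc M.comap f = (M.subgroupOf f.range).comap f.rangeRestrict := rfl
    _ ≤ (B.map f.rangeRestrict).comap f.rangeRestrict := Subgroup.comap_mono hMB
    _ = B := Subgroup.comap_map_eq_self (by rwa [f.ker_rangeRestrict])

theorem exists_normal_le_comap_eq [B.Normal] {N : Subgroup G} [N.Normal] (hp : p.Prime)
    (hf : TopPEmbedded p f.range) (hcent : ∀ a, f a ∈ Subgroup.center G)
    (hB : HasPPowIndex p B) (hN : HasPPowIndex p N) (hker : f.ker ≤ B) (hBN : B ≤ N.comap f) :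
    ∃ P : Subgroup G, P.Normal ∧ HasPPowIndex p P ∧ P ≤ N ∧ P.comap f = B := by
  obtain ⟨M, _, hM, hMB⟩ := hf.exists_normal_comap_le hp hB hker
  have := normal_map_of_forall_mem_center hcent B
  exact ⟨(M ⊓ N) ⊔ B.map f, inferInstance, (hM.inf hp hN).mono hp le_sup_left,
    sup_le inf_le_right (Subgroup.map_le_iff_le_comap.2 hBN),
    comap_sup_map_eq_of_comap_le ((Subgroup.comap_mono inf_le_left).trans hMB)⟩

end TopPEmbedded

section CentralAmalgam

variable {p : ℕ} {ι A : Type*} [CommGroup A] {G : ι → Type*} [∀ i, Group (G i)]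
  {φ : ∀ i, A →* G i}

theorem exists_normal_family_comap_eq [Finite ι] (hp : p.Prime)
    (hinj : ∀ i, Function.Injective (φ i)) (hcent : ∀ i a, φ i a ∈ Subgroup.center (G i))
    (hemb : ∀ i, TopPEmbedded p (φ i).range) {N : ∀ i, Subgroup (G i)} [∀ i, (N i).Normal]
    (hN : ∀ i, HasPPowIndex p (N i)) :
    ∃ P : ∀ i, Subgroup (G i), (∀ i, (P i).Normal) ∧ (∀ i, HasPPowIndex p (P i)) ∧
      (∀ i, P i ≤ N i) ∧ ∀ i j, (P i).comap (φ i) = (P j).comap (φ j) := by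
  have hB : HasPPowIndex p (⨅ i, (N i).comap (φ i)) := .iInf hp fun i ↦ (hN i).comap hp (φ i)
  choose P hPnormal hP hPN hPB using fun i ↦
    (hemb i).exists_normal_le_comap_eq hp (hcent i) hB (hN i)
      (((φ i).ker_eq_bot (hinj i)).trans_le bot_le) (iInf_le _ i)
  exact ⟨P, hPnormal, hP, hPN, fun i j ↦ (hPB i).trans (hPB j).symm⟩

/-- The relations that identify the images of `A` in the direct product `Π i, G i`: all tuples
`(φ i (a i))` with `∏ i, a i = 1`. When the images are central, the quotient by this subgroup is
the central product of the `G i` amalgamating `A`. -/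
def amalgamRelations [Fintype ι] (φ : ∀ i, A →* G i) : Subgroup (∀ i, G i) :=
  (∏ i, Pi.evalMonoidHom (fun _ : ι ↦ A) i).ker.map (MonoidHom.piMap φ)

theorem amalgamRelations_normal [Fintype ι] (hcent : ∀ i a, φ i a ∈ Subgroup.center (G i)) :
    (amalgamRelations φ).Normal :=
  normal_map_of_forall_mem_center (fun a ↦ Subgroup.mem_center_iff.2 fun g ↦ funext fun i ↦
    Subgroup.mem_center_iff.1 (hcent i (a i)) (g i)) _

theorem inv_mulSingle_mul_mulSingle_mem_amalgamRelations [Fintype ι] [DecidableEq ι] (i j : ι)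
    (a : A) :
    (Pi.mulSingle i (φ i a))⁻¹ * Pi.mulSingle j (φ j a) ∈ amalgamRelations φ := by
  have piMap_mulSingle (k : ι) :
      MonoidHom.piMap φ (Pi.mulSingle k a) = Pi.mulSingle k (φ k a) :=
    funext (Pi.apply_mulSingle (fun l ↦ φ l) (fun l ↦ map_one (φ l)) k a)
  refine ⟨(Pi.mulSingle i a)⁻¹ * Pi.mulSingle j a, ?_, ?_⟩
  · simp [MonoidHom.mem_ker, Finset.prod_mul_distrib]
  · rw [map_mul, map_inv, piMap_mulSingle, piMap_mulSingle]

theorem mem_of_mulSingle_mem_iInf_comap_sup_amalgamRelations [Fintype ι] [DecidableEq ι]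
    (hcent : ∀ i a, φ i a ∈ Subgroup.center (G i)) {P : ∀ i, Subgroup (G i)}
    (hcomap : ∀ i j, (P i).comap (φ i) = (P j).comap (φ j)) {i : ι} {g : G i}
    (hg : Pi.mulSingle i g ∈
      (⨅ j, (P j).comap (Pi.evalMonoidHom G j)) ⊔ amalgamRelations φ) :
    g ∈ P i := by
  have := amalgamRelations_normal hcent
  obtain ⟨x, hx, _, ⟨a, ha, rfl⟩, hxa⟩ := Subgroup.mem_sup_of_normal_right.1 hg
  have hxP (j : ι) : x j ∈ P j := Subgroup.mem_iInf.1 hx j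
  have mul_eq (j : ι) : x j * φ j (a j) = Pi.mulSingle i g j := congrFun hxa j
  have mem_of_ne (j : ι) (hj : j ≠ i) : a j ∈ (P i).comap (φ i) := by
    rw [hcomap i j, Subgroup.mem_comap, ← (P j).mul_mem_cancel_left (hxP j), mul_eq,
      Pi.mulSingle_eq_of_ne hj]
    exact one_mem _
  have prod_eq_one : a i * ∏ j ∈ Finset.univ.erase i, a j = 1 := by
    rw [Finset.mul_prod_erase _ _ (Finset.mem_univ i)]
    simpa [MonoidHom.mem_ker] using ha
  have mem_self : φ i (a i) ∈ P i := by
    rw [← Subgroup.mem_comap, eq_inv_of_mul_eq_one_left prod_eq_one]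
    exact inv_mem (Subgroup.prod_mem _ fun j hj ↦ mem_of_ne j (Finset.ne_of_mem_erase hj))
  simpa [mul_eq] using mul_mem (hxP i) mem_self

theorem exists_pushoutI_hom_of_amalgamRelations_le [Fintype ι] [DecidableEq ι] [Nonempty ι]
    {L : Subgroup (∀ i, G i)} [L.Normal] (hL : amalgamRelations φ ≤ L) :
    ∃ F : Monoid.PushoutI φ →* (∀ i, G i) ⧸ L,
      ∀ i g, F (Monoid.PushoutI.of i g) = QuotientGroup.mk (Pi.mulSingle i g) := by
  let f (i : ι) : G i →* (∀ i, G i) ⧸ L := (QuotientGroup.mk' L).comp (MonoidHom.mulSingle G i)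
  let i₀ := Classical.arbitrary ι
  have hf (i : ι) : (f i).comp (φ i) = (f i₀).comp (φ i₀) := MonoidHom.ext fun a ↦
    QuotientGroup.eq.2 (hL (inv_mulSingle_mul_mulSingle_mem_amalgamRelations i i₀ a))
  exact ⟨Monoid.PushoutI.lift f _ hf, fun i g ↦ Monoid.PushoutI.lift_of f _ hf g⟩

theorem exists_normal_pushoutI_comap_le [Finite ι] [Nonempty ι] (hp : p.Prime)
    (hcent : ∀ i a, φ i a ∈ Subgroup.center (G i)) {P : ∀ i, Subgroup (G i)}
    [∀ i, (P i).Normal] (hP : ∀ i, HasPPowIndex p (P i))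
    (hcomap : ∀ i j, (P i).comap (φ i) = (P j).comap (φ j)) :
    ∃ M : Subgroup (Monoid.PushoutI φ), M.Normal ∧ HasPPowIndex p M ∧
      ∀ i, M.comap (Monoid.PushoutI.of i) ≤ P i := by
  classical
  cases nonempty_fintype ι
  have := amalgamRelations_normal hcent
  have : (⨅ i, (P i).comap (Pi.evalMonoidHom G i)).Normal :=
    Subgroup.normal_iInf_normal fun _ ↦ inferInstance
  let L := (⨅ i, (P i).comap (Pi.evalMonoidHom G i)) ⊔ amalgamRelations φ
  have hL : HasPPowIndex p L :=
    (HasPPowIndex.iInf hp fun i ↦ (hP i).comap hp (Pi.evalMonoidHom G i)).mono hp le_sup_left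
  have hbot : HasPPowIndex p (⊥ : Subgroup ((∀ i, G i) ⧸ L)) :=
    hL.of_index_dvd hp (Subgroup.index_bot.trans L.index_eq_card.symm).dvd
  obtain ⟨F, hF⟩ := exists_pushoutI_hom_of_amalgamRelations_le (L := L) le_sup_right
  refine ⟨F.ker, inferInstance, hbot.comap hp F, fun i g hg ↦ ?_⟩
  refine mem_of_mulSingle_mem_iInf_comap_sup_amalgamRelations hcent hcomap ?_
  exact (QuotientGroup.eq_one_iff _).1 ((hF i g).symm.trans hg)

end CentralAmalgam

theorem factors_top_p_embedded_central_amalgam_general {p : ℕ} (hp : p.Prime)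
    {ι A : Type*} [Finite ι] [CommGroup A] {G : ι → Type*} [∀ i, Group (G i)]
    {φ : ∀ i, A →* G i} (hinj : ∀ i, Function.Injective (φ i))
    (hcent : ∀ i, ∀ a : A, φ i a ∈ Subgroup.center (G i))
    (hemb : ∀ i, TopPEmbedded p (φ i).range) :
    (∀ N : ∀ i, Subgroup (G i), (∀ i, (N i).Normal) → (∀ i, HasPPowIndex p (N i)) →
      ∃ P : ∀ i, Subgroup (G i), (∀ i, (P i).Normal) ∧ (∀ i, HasPPowIndex p (P i)) ∧
        (∀ i, P i ≤ N i) ∧ ∀ i j, (P i).comap (φ i) = (P j).comap (φ j)) ∧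
    (∀ i, ∀ N : Subgroup (G i), N.Normal → HasPPowIndex p N →
      ∃ M : Subgroup (Monoid.PushoutI φ), M.Normal ∧ HasPPowIndex p M ∧
        M.comap (Monoid.PushoutI.of i) ≤ N) := by
  classical
  refine ⟨fun N _ hN ↦ exists_normal_family_comap_eq hp hinj hcent hemb hN,
    fun i N hNnormal hN ↦ ?_⟩
  have : Nonempty ι := ⟨i⟩
  let N' : ∀ j, Subgroup (G j) := Function.update (fun _ ↦ ⊤) i N
  have (j : ι) : (N' j).Normal :=
    (Function.forall_update_iff _ fun j (H : Subgroup (G j)) ↦ H.Normal).2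
      ⟨hNnormal, fun _ _ ↦ inferInstance⟩ j
  have hN' : ∀ j, HasPPowIndex p (N' j) :=
    (Function.forall_update_iff _ fun j (H : Subgroup (G j)) ↦ HasPPowIndex p H).2
      ⟨hN, fun _ _ ↦ .top p⟩
  obtain ⟨P, _, hP, hPN, hcomap⟩ := exists_normal_family_comap_eq hp hinj hcent hemb hN'
  obtain ⟨M, hMnormal, hM, hMP⟩ := exists_normal_pushoutI_comap_le hp hcent hP hcomap
  exact ⟨M, hMnormal, hM, (hMP i).trans ((hPN i).trans_eq (Function.update_self ..))⟩

/-- If `A` is a finitely generated abelian group embedded centrally (and topologically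
`p`-embedded) in each of `G true` and `G false`, then compatible pairs of normal
subgroups of `p`-power index exist, and consequently each factor is topologically
`p`-embedded in the amalgamated free product (the pushout of the two embeddings). -/
theorem factors_top_p_embedded_central_amalgam (p : ℕ) (hp : p.Prime)
    (A : Type*) [CommGroup A] (hfg : Group.FG A) (G : Bool → Type*) [∀ i, Group (G i)]
    (φ : ∀ i, A →* G i) (hinj : ∀ i, Function.Injective (φ i))
    (hcent : ∀ i, ∀ a : A, φ i a ∈ Subgroup.center (G i))
    (hemb : ∀ i, TopPEmbedded p (φ i).range) :
    (∀ N : ∀ i, Subgroup (G i), (∀ i, (N i).Normal) →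
      (∀ i, ∃ k : ℕ, (N i).index = p ^ k) →
      ∃ P : ∀ i, Subgroup (G i), (∀ i, (P i).Normal) ∧
        (∀ i, ∃ k : ℕ, (P i).index = p ^ k) ∧ (∀ i, P i ≤ N i) ∧
        (P true).comap (φ true) = (P false).comap (φ false)) ∧
    (∀ i, ∀ N : Subgroup (G i), N.Normal → (∃ k : ℕ, N.index = p ^ k) →
      ∃ M : Subgroup (Monoid.PushoutI φ), M.Normal ∧ (∃ k : ℕ, M.index = p ^ k) ∧
        M.comap (Monoid.PushoutI.of (φ := φ) i) ≤ N) := by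
  refine (factors_top_p_embedded_central_amalgam_general hp hinj hcent hemb).imp_left ?_
  exact fun compatible N hNnormal hN ↦ (compatible N hNnormal hN).imp
    fun _ ⟨hPnormal, hP, hPN, hcomap⟩ ↦ ⟨hPnormal, hP, hPN, hcomap true false⟩
end

section
/- Let p be a prime number, let A be a finitely generated abelian group, and let B be a subgroup of A whose index [A:B] is a power of p. Then the subgroup U = ⋂_{φ ∈ Aut(A)} φ(B), the intersection of the images of B under all automorphisms of A, is a subgroup of A contained in B, invariant under every automorphism of A, and of index [A:U] a power of p (in particular of finite index). -/
/-!
Every `φ(B)` contains the kernel of a homomorphism from `A` to the finite group of permutations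
of `A ⧸ B`. A finitely generated group has only finitely many such homomorphisms, so `U` has
finite index. When `B` is normal of index `n`, the `n`-th powers lie in every `φ(B)`, hence in `U`;
for `n` a power of `p` this makes `A ⧸ U` a finite `p`-group.
-/

theorem finite_monoidHom_of_fg (M N : Type*) [Monoid M] [Monoid.FG M] [Monoid N] [Finite N] :
    Finite (M →* N) := by
  obtain ⟨S, hS⟩ := Monoid.FG.fg_top (M := M)
  have restrict_injective : Function.Injective fun (f : M →* N) (s : S) ↦ f s :=
    fun f g hfg ↦ MonoidHom.eq_of_eqOn_denseM hS fun s hs ↦ congrFun hfg ⟨s, hs⟩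
  exact Finite.of_injective _ restrict_injective

theorem finiteIndex_iInf_ker (G Q : Type*) [Group G] [Group.FG G] [Group Q] [Finite Q] :
    (⨅ f : G →* Q, f.ker).FiniteIndex :=
  have := finite_monoidHom_of_fg G Q
  Subgroup.finiteIndex_iInf fun f ↦ Subgroup.finiteIndex_ker f

section CharacteristicCore

variable {G : Type*} [Group G] (H : Subgroup G)

/-- The characteristic core of `H`: the largest characteristic subgroup of `G` contained in `H`,
encoded as the intersection of the images of `H` under all automorphisms of `G`. It is the analogue
of `Subgroup.normalCore` with all automorphisms in place of the inner ones. -/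
def characteristicCore : Subgroup G :=
  ⨅ φ : MulAut G, H.map φ.toMonoidHom

theorem mem_characteristicCore {H : Subgroup G} {g : G} :
    g ∈ characteristicCore H ↔ ∀ φ : MulAut G, φ g ∈ H := by
  simp only [characteristicCore, Subgroup.map_equiv_eq_comap_symm', Subgroup.mem_iInf]
  exact (Equiv.inv (MulAut G)).forall_congr_left

theorem characteristicCore_le : characteristicCore H ≤ H :=
  fun _ hg ↦ mem_characteristicCore.1 hg 1

instance characteristicCore_characteristic : (characteristicCore H).Characteristic :=
  Subgroup.characteristic_iff_le_comap.2 fun ψ _ hg ↦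
    mem_characteristicCore.2 fun φ ↦ mem_characteristicCore.1 hg (φ * ψ)

theorem pow_index_mem_characteristicCore [H.Normal] (g : G) :
    g ^ H.index ∈ characteristicCore H :=
  mem_characteristicCore.2 fun φ ↦ map_pow φ g H.index ▸ H.pow_index_mem (φ g)

theorem iInf_ker_le_characteristicCore :
    ⨅ f : G →* Equiv.Perm (G ⧸ H), f.ker ≤ characteristicCore H := by
  refine fun g hg ↦ mem_characteristicCore.2 fun φ ↦ H.normalCore_le ?_
  rw [Subgroup.normalCore_eq_ker]
  exact Subgroup.mem_iInf.1 hg ((MulAction.toPermHom G (G ⧸ H)).comp φ.toMonoidHom)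

instance characteristicCore_finiteIndex [Group.FG G] [H.FiniteIndex] :
    (characteristicCore H).FiniteIndex :=
  have := finiteIndex_iInf_ker G (Equiv.Perm (G ⧸ H))
  Subgroup.finiteIndex_of_le (iInf_ker_le_characteristicCore H)

theorem isPGroup_quotient_characteristicCore [H.Normal] {p k : ℕ} (hH : H.index = p ^ k) :
    IsPGroup p (G ⧸ characteristicCore H) := by
  refine fun x ↦ ⟨k, ?_⟩
  induction x using QuotientGroup.induction_on with
  | H g => exact (QuotientGroup.eq_one_iff _).2 (hH ▸ pow_index_mem_characteristicCore H g)

end CharacteristicCore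

theorem characteristic_core_of_p_power_index_general (p : ℕ) (hp : p.Prime)
    (G : Type*) [Group G] [Group.FG G] (H : Subgroup G) [H.Normal]
    (hH : ∃ k : ℕ, H.index = p ^ k) :
    characteristicCore H ≤ H ∧
    (∀ ψ : MulAut G, (characteristicCore H).map ψ.toMonoidHom = characteristicCore H) ∧
    (∃ k : ℕ, (characteristicCore H).index = p ^ k) := by
  obtain ⟨k, hk⟩ := hH
  have : Fact p.Prime := ⟨hp⟩
  have : H.FiniteIndex := ⟨hk ▸ pow_ne_zero k hp.ne_zero⟩
  exact ⟨characteristicCore_le H,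
    Subgroup.characteristic_iff_map_eq.1 (characteristicCore_characteristic H),
    IsPGroup.iff_card.1 (isPGroup_quotient_characteristicCore H hk)⟩

/-- If `B` is a subgroup of `p`-power index in a finitely generated abelian group `A`,
then the intersection `U` of the images of `B` under all automorphisms of `A` is
contained in `B`, is invariant under every automorphism of `A`, and has `p`-power
index in `A`. -/
theorem characteristic_core_of_p_power_index (p : ℕ) (hp : p.Prime)
    (A : Type*) [CommGroup A] (hfg : Group.FG A) (B : Subgroup A)
    (hB : ∃ k : ℕ, B.index = p ^ k) :
    (⨅ φ : MulAut A, B.map φ.toMonoidHom) ≤ B ∧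
    (∀ ψ : MulAut A,
      (⨅ φ : MulAut A, B.map φ.toMonoidHom).map ψ.toMonoidHom =
        ⨅ φ : MulAut A, B.map φ.toMonoidHom) ∧
    (∃ k : ℕ, (⨅ φ : MulAut A, B.map φ.toMonoidHom).index = p ^ k) :=
  characteristic_core_of_p_power_index_general p hp A B hB
end

section
/- Let p be a prime number and let σ and τ be the automorphisms of ℤ × ℤ given by σ(a,b) = (a+b, b) and τ(a,b) = (a, a+b). If M is a subgroup of ℤ × ℤ that is invariant under both σ and τ and whose index in ℤ × ℤ is a (finite) power of p, then M = p^nℤ × p^nℤ for some natural number n. -/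
/-- The automorphism `σ(a,b) = (a+b, b)` of `ℤ × ℤ`. -/
def sigmaAut : (ℤ × ℤ) ≃+ (ℤ × ℤ) where
  toFun x := (x.1 + x.2, x.2)
  invFun x := (x.1 - x.2, x.2)
  left_inv x := by simp
  right_inv x := by simp
  map_add' x y := by simp [Prod.ext_iff]; ring

/-- The automorphism `τ(a,b) = (a, a+b)` of `ℤ × ℤ`. -/
def tauAut : (ℤ × ℤ) ≃+ (ℤ × ℤ) where
  toFun x := (x.1, x.1 + x.2)
  invFun x := (x.1, x.2 - x.1)
  left_inv x := by simp
  right_inv x := by simp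
  map_add' x y := by simp [Prod.ext_iff]; ring

section Shear

variable {A : Type*} [AddGroup A] {M : AddSubgroup (A × A)} {x : A × A}

theorem snd_zero_mem_of_shear_fst_mem (hσ : ∀ x ∈ M, (x.1 + x.2, x.2) ∈ M) (hx : x ∈ M) :
    (x.2, 0) ∈ M := by
  -- `A` need not be commutative, so `-x` must stand on the left for `x.1` to cancel.
  have difference_mem : -x + (x.1 + x.2, x.2) ∈ M := M.add_mem (M.neg_mem hx) (hσ x hx)
  have difference_eq : -x + (x.1 + x.2, x.2) = (x.2, 0) := by ext <;> simp
  exact difference_eq ▸ difference_mem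

theorem zero_fst_mem_of_shear_snd_mem (hτ : ∀ x ∈ M, (x.1, x.1 + x.2) ∈ M) (hx : x ∈ M) :
    (0, x.1) ∈ M := by
  have difference_mem : (x.1, x.1 + x.2) - x ∈ M := M.sub_mem (hτ x hx) hx
  have difference_eq : (x.1, x.1 + x.2) - x = (0, x.1) := by ext <;> simp
  exact difference_eq ▸ difference_mem

theorem eq_prod_comap_inl_of_shear_mem (hσ : ∀ x ∈ M, (x.1 + x.2, x.2) ∈ M)
    (hτ : ∀ x ∈ M, (x.1, x.1 + x.2) ∈ M) :
    M = (M.comap (AddMonoidHom.inl A A)).prod (M.comap (AddMonoidHom.inl A A)) := by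
  ext ⟨a, b⟩
  simp only [AddSubgroup.mem_prod, AddSubgroup.mem_comap, AddMonoidHom.inl_apply]
  constructor
  · intro hab
    have zero_a_mem : (0, a) ∈ M := zero_fst_mem_of_shear_snd_mem hτ hab
    exact ⟨snd_zero_mem_of_shear_fst_mem hσ zero_a_mem, snd_zero_mem_of_shear_fst_mem hσ hab⟩
  · rintro ⟨ha, hb⟩
    have zero_b_mem : (0, b) ∈ M := zero_fst_mem_of_shear_snd_mem hτ hb
    simpa using M.add_mem ha zero_b_mem

end Shear

theorem exists_nat_eq_zmultiples (H : AddSubgroup ℤ) :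
    ∃ d : ℕ, H = AddSubgroup.zmultiples (d : ℤ) := by
  obtain ⟨a, rfl⟩ := Int.subgroup_cyclic H
  exact ⟨a.natAbs, by rw [Int.zmultiples_natAbs, AddSubgroup.zmultiples_eq_closure]⟩

theorem index_prod_zmultiples (a b : ℤ) :
    ((AddSubgroup.zmultiples a).prod (AddSubgroup.zmultiples b)).index =
      a.natAbs * b.natAbs := by
  rw [AddSubgroup.index_prod, Int.index_zmultiples, Int.index_zmultiples]

theorem invariant_subgroup_eq_prod_general (M : AddSubgroup (ℤ × ℤ))
    (hσ : M.map sigmaAut.toAddMonoidHom ≤ M) (hτ : M.map tauAut.toAddMonoidHom ≤ M) :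
    ∃ d : ℕ, M = (AddSubgroup.zmultiples (d : ℤ)).prod (AddSubgroup.zmultiples (d : ℤ)) := by
  obtain ⟨d, hd⟩ := exists_nat_eq_zmultiples (M.comap (AddMonoidHom.inl ℤ ℤ))
  exact ⟨d, hd ▸ eq_prod_comap_inl_of_shear_mem
    (AddSubgroup.map_le_iff_le_comap.mp hσ) (AddSubgroup.map_le_iff_le_comap.mp hτ)⟩

/-- A subgroup of `ℤ × ℤ` of `p`-power index invariant under both `σ` and `τ` equals
`p^n ℤ × p^n ℤ` for some `n`. -/
theorem invariant_subgroup_eq_prod (p : ℕ) (hp : p.Prime)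
    (M : AddSubgroup (ℤ × ℤ))
    (hσ : M.map sigmaAut.toAddMonoidHom = M)
    (hτ : M.map tauAut.toAddMonoidHom = M)
    (hM : ∃ k : ℕ, M.index = p ^ k) :
    ∃ n : ℕ, M = (AddSubgroup.zmultiples ((p : ℤ) ^ n)).prod
      (AddSubgroup.zmultiples ((p : ℤ) ^ n)) := by
  obtain ⟨d, rfl⟩ := invariant_subgroup_eq_prod_general M hσ.le hτ.le
  obtain ⟨k, hk⟩ := hM
  rw [index_prod_zmultiples, Int.natAbs_natCast] at hk
  obtain ⟨n, -, rfl⟩ := (Nat.dvd_prime_pow hp).mp (Dvd.intro d hk)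
  exact ⟨n, by rw [Nat.cast_pow]⟩
end

section
/- Let N = ℤ × ℤ, let σ and τ be the automorphisms of N given by σ(a,b) = (a+b, b) and τ(a,b) = (a, a+b), let G1 = N ⋊_σ ℤ and G2 = N ⋊_τ ℤ be the corresponding semidirect products (in which 1 ∈ ℤ acts by σ, respectively τ), and let G = G1 *_N G2 be the free product of G1 and G2 amalgamating the common subgroup N. Then for every prime p, every homomorphism θ from G to a finite p-group is trivial on N; that is, θ maps the image of N in G to the identity. -/
/-- `N = ℤ × ℤ`, written multiplicatively. -/
abbrev Nmul : Type := Multiplicative (ℤ × ℤ)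

/-- The action of `ℤ` on `N` in which `1` acts by `σ`. -/
def actSigma : Multiplicative ℤ →* MulAut Nmul :=
  zpowersHom (MulAut Nmul) (AddEquiv.toMultiplicative sigmaAut)

/-- The action of `ℤ` on `N` in which `1` acts by `τ`. -/
def actTau : Multiplicative ℤ →* MulAut Nmul :=
  zpowersHom (MulAut Nmul) (AddEquiv.toMultiplicative tauAut)

/-- `G₁ = N ⋊_σ ℤ`. -/
abbrev G1 : Type := Nmul ⋊[actSigma] Multiplicative ℤ

/-- `G₂ = N ⋊_τ ℤ`. -/
abbrev G2 : Type := Nmul ⋊[actTau] Multiplicative ℤ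

/-- The two factors of the amalgamated product, indexed by `Bool`. -/
abbrev Gfam : Bool → Type := fun b => match b with
  | true => G1
  | false => G2

instance (b : Bool) : Group (Gfam b) := by cases b <;> dsimp [Gfam] <;> infer_instance

/-- The canonical inclusions of `N` into the two factors. -/
def incl : ∀ b : Bool, Nmul →* Gfam b := fun b => match b with
  | true => SemidirectProduct.inl
  | false => SemidirectProduct.inl

/-- `G = G₁ *_N G₂`, the free product amalgamating the common subgroup `N`. -/
abbrev Gamal : Type := Monoid.PushoutI incl

/-!
Since `σ - 1` sends `(0, a)` to `(a, 0)` and `τ - 1` sends `(b, 0)` to `(0, b)`, every element of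
`N` is a product of commutators of elements of `N` with the two stable letters of `G`. Hence
`N ≤ [N, G]`, so `N` lies in every term of the lower central series of `G`, and no homomorphism to
a group whose lower central series has trivial intersection (in particular to a finite `p`-group)
can detect it.
-/

open scoped commutatorElement

section CentralSeries

variable {G : Type*} [Group G]

theorem le_lowerCentralSeries_of_le_commutator {H S : Subgroup G} (hHS : H ≤ S) (h : H ≤ ⁅H, S⁆)
    (n : ℕ) : H ≤ S.lowerCentralSeries n := by
  induction n with
  | zero => exact hHS
  | succ n ih => exact h.trans (Subgroup.commutator_mono ih le_rfl)

theorem map_iInf_lowerCentralSeries_top_le {K : Type*} [Group K] (f : G →* K) :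
    (⨅ n, (⊤ : Subgroup G).lowerCentralSeries n).map f ≤
      ⨅ n, (⊤ : Subgroup K).lowerCentralSeries n := by
  refine le_iInf fun n ↦ (Subgroup.map_mono (iInf_le _ n)).trans ?_
  rw [Subgroup.map_lowerCentralSeries]
  exact Subgroup.lowerCentralSeries_mono n le_top

theorem iInf_lowerCentralSeries_top_eq_bot [Group.IsNilpotent G] :
    ⨅ n, (⊤ : Subgroup G).lowerCentralSeries n = ⊥ :=
  eq_bot_iff.2 <| (iInf_le _ (Group.nilpotencyClass G)).trans
    Subgroup.lowerCentralSeries_nilpotencyClass.le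

theorem isNilpotent_of_card_eq_prime_pow {p k : ℕ} (hp : p.Prime) (hG : Nat.card G = p ^ k) :
    Group.IsNilpotent G := by
  have : Fact p.Prime := ⟨hp⟩
  have : Finite G := Nat.finite_of_card_ne_zero (hG ▸ pow_ne_zero k hp.ne_zero)
  exact (IsPGroup.of_card hG).isNilpotent

end CentralSeries

theorem inl_aut_div_eq_commutatorElement {N K : Type*} [Group N] [Group K] {φ : K →* MulAut N}
    (k : K) (n : N) :
    (SemidirectProduct.inl (φ k n / n) : N ⋊[φ] K) =
      ⁅(SemidirectProduct.inr k : N ⋊[φ] K), SemidirectProduct.inl n⁆ := by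
  rw [commutatorElement_def, map_div, SemidirectProduct.inl_aut, map_inv, div_eq_mul_inv]

/-- The canonical homomorphism `N →* G₁ *_N G₂`, whose range is the amalgamated subgroup. -/
def ofN : Nmul →* Gamal := Monoid.PushoutI.base incl

/-- The canonical homomorphism `G₁ →* G₁ *_N G₂`, with `G1` rather than `Gfam true` as its domain
so that the lemmas on semidirect products apply to it. -/
def ofG1 : G1 →* Gamal := Monoid.PushoutI.of (φ := incl) true

/-- The canonical homomorphism `G₂ →* G₁ *_N G₂`, with `G2` rather than `Gfam false` as its domain
so that the lemmas on semidirect products apply to it. -/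
def ofG2 : G2 →* Gamal := Monoid.PushoutI.of (φ := incl) false

theorem ofG1_inl (x : Nmul) : ofG1 (SemidirectProduct.inl x) = ofN x :=
  Monoid.PushoutI.of_apply_eq_base incl true x

theorem ofG2_inl (x : Nmul) : ofG2 (SemidirectProduct.inl x) = ofN x :=
  Monoid.PushoutI.of_apply_eq_base incl false x

theorem ofN_actSigma_div (k : Multiplicative ℤ) (x : Nmul) :
    ofN (actSigma k x / x) = ⁅ofG1 (SemidirectProduct.inr k), ofN x⁆ := by
  rw [← ofG1_inl, ← ofG1_inl, inl_aut_div_eq_commutatorElement, map_commutatorElement]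

theorem ofN_actTau_div (k : Multiplicative ℤ) (x : Nmul) :
    ofN (actTau k x / x) = ⁅ofG2 (SemidirectProduct.inr k), ofN x⁆ := by
  rw [← ofG2_inl, ← ofG2_inl, inl_aut_div_eq_commutatorElement, map_commutatorElement]

theorem actSigma_ofAdd_one_div (a : ℤ) :
    actSigma (.ofAdd 1) (.ofAdd (0, a)) / .ofAdd (0, a) = .ofAdd (a, 0) := by
  simp [actSigma, sigmaAut, ← ofAdd_sub]

theorem actTau_ofAdd_one_div (b : ℤ) :
    actTau (.ofAdd 1) (.ofAdd (b, 0)) / .ofAdd (b, 0) = .ofAdd (0, b) := by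
  simp [actTau, tauAut, ← ofAdd_sub]

theorem exists_eq_actSigma_div_mul_actTau_div (x : Nmul) :
    ∃ y z : Nmul, x = actSigma (.ofAdd 1) y / y * (actTau (.ofAdd 1) z / z) := by
  refine ⟨.ofAdd (0, x.toAdd.1), .ofAdd (x.toAdd.2, 0), ?_⟩
  rw [actSigma_ofAdd_one_div, actTau_ofAdd_one_div]
  exact Multiplicative.toAdd.injective (by simp)

theorem range_ofN_le_commutator_top : ofN.range ≤ ⁅ofN.range, ⊤⁆ := by
  rw [Subgroup.commutator_comm]
  have commutator_mem (g : Gamal) (x : Nmul) : ⁅g, ofN x⁆ ∈ ⁅⊤, ofN.range⁆ :=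
    Subgroup.commutator_mem_commutator (Subgroup.mem_top g) ⟨x, rfl⟩
  rintro _ ⟨x, rfl⟩
  obtain ⟨y, z, rfl⟩ := exists_eq_actSigma_div_mul_actTau_div x
  rw [map_mul, ofN_actSigma_div, ofN_actTau_div]
  exact mul_mem (commutator_mem _ y) (commutator_mem _ z)

theorem range_ofN_le_iInf_lowerCentralSeries :
    ofN.range ≤ ⨅ n, (⊤ : Subgroup Gamal).lowerCentralSeries n :=
  le_iInf (le_lowerCentralSeries_of_le_commutator le_top range_ofN_le_commutator_top)

theorem amalgam_hom_kills_N_general {P : Type*} [Group P]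
    (hP : ⨅ n, (⊤ : Subgroup P).lowerCentralSeries n = ⊥) (θ : Gamal →* P) (x : Nmul) :
    θ (Monoid.PushoutI.of (φ := incl) true (SemidirectProduct.inl x)) = 1 := by
  have hx : θ (ofN x) ∈ ⨅ n, (⊤ : Subgroup P).lowerCentralSeries n :=
    map_iInf_lowerCentralSeries_top_le θ <|
      Subgroup.mem_map_of_mem θ (range_ofN_le_iInf_lowerCentralSeries ⟨x, rfl⟩)
  rw [hP, Subgroup.mem_bot, ← ofG1_inl] at hx
  exact hx

/-- Any homomorphism from `G₁ *_N G₂` to a finite `p`-group kills the image of `N`. -/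
theorem amalgam_hom_kills_N (p : ℕ) (hp : p.Prime) (P : Type) [Group P]
    (hP : ∃ k : ℕ, Nat.card P = p ^ k) (θ : Gamal →* P) :
    ∀ x : Nmul, θ (Monoid.PushoutI.of (φ := incl) true (SemidirectProduct.inl x)) = 1 := by
  obtain ⟨k, hk⟩ := hP
  have := isNilpotent_of_card_eq_prime_pow hp hk
  exact amalgam_hom_kills_N_general iInf_lowerCentralSeries_top_eq_bot θ
end
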